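/- For every real μ > 4·ln 2 there exist a constant c > 0 and N ∈ ℕ such that for all n ≥ N divisible by 6, setting β* = μ/n, the Metropolis chain on Ω_RGB with the flattened stationary distribution π̃ mixes in polynomial time: τ(ε) ≤ n^c·(1 + ln(1/ε)) for every ε ∈ (0,1). -/

import Mathlib

/-!
The chain satisfies a Poincaré inequality whose constant is polynomial in `n`; together with
`1/π̃(x) ≤ exp (n²)` and the holding probability `1/3` (a third of the proposals recolor a vertex
with its own color) this gives the mixing time bound (`tv_decay`, `inv_flatPi_le`).

The Poincaré inequality is proved by comparison along paths of color-count classes. The uniform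
measures on two classes that differ by one recoloring are coupled by a biregular bipartite graph,
so the mean square deviation of a function over a class is transported along a path of classes at
a cost controlled by the Dirichlet form divided by the least flattened weight on the path
(`msd_climb`). Inside one class `(t, k, k)` with `k + 3 ≤ t`, two vertices of different colors can
be exchanged by two recolorings through a configuration of `Ω_RGB`; a permutation is a product of
at most `n` such exchanges, which bounds the variance over that class (`msd_top`). Hence it suffices
that every class reaches one fixed class `(t, k, k)` by a path of length `O(n)` along which the
flattened weight drops by at most a polynomial factor (`poincare_of_climb`).

Such paths exist (`landscape`). A recoloring of color `b` to color `a` multiplies `w` by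
`exp (g(σ_a + 1) - g(σ_b))` with `g(s) = β s - log s`, which decreases up to `s = 1/β` and increases
afterwards. So, as long as `σ₂` and `σ₃` differ by at least two, recoloring blue to red (if
`σ₂ ≥ 1/β`) or blue to green (if `σ₂ ≤ 1/β`) does not decrease `w`, and the path arrives at the line
`(n - 2k, k, k)` (`climb_to_line`). On the line the logarithmic increment of `w` is an explicit
function `incr` with convex derivative. The minimality of `t_min` and convexity show that `incr`
changes sign only once between the monochromatic end and `t_min` (`incr_single_crossing`), so there
`w` is unimodal, while on the other side of `t_min` the flattened weight is constant on the line.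
The peak of this profile is the target class.
-/

open Finset

noncomputable section

/-- The mixing time of a Markov chain with transition matrix `P` and target
distribution `π`: the least `t` such that for all `t' ≥ t` the total variation
distance of the `t'`-step distribution from `π` is at most `ε`, from every start. -/
noncomputable def mixingTime {S : Type} [Fintype S] [DecidableEq S]
    (P : Matrix S S ℝ) (π : S → ℝ) (ε : ℝ) : ℕ :=
  sInf {t : ℕ | ∀ t' : ℕ, t ≤ t' → ∀ x : S,
    (1/2) * ∑ y : S, |(P ^ t') x y - π y| ≤ ε}

/-- The Metropolis chain with proposal kernel `Q` and target distribution `π`. -/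
noncomputable def metropolis {S : Type} [Fintype S] [DecidableEq S]
    (Q : S → S → ℝ) (π : S → ℝ) : Matrix S S ℝ :=
  Matrix.of fun x y =>
    if y = x then 1 - ∑ z ∈ Finset.univ.erase x, Q x z * min 1 (π z / π x)
    else Q x y * min 1 (π y / π x)

/-- Off-diagonal transition rates of the simulated tempering chain. -/
noncomputable def temperingOff {S : Type} [Fintype S] [DecidableEq S] {M : ℕ}
    (Mk : Fin (M+1) → Matrix S S ℝ) (π : Fin (M+1) → S → ℝ)
    (p q : S × Fin (M+1)) : ℝ :=
  (if q.2 = p.2 then (1/2) * Mk p.2 p.1 q.1 else 0) +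
  (if q.1 = p.1 ∧ ((q.2 : ℕ) = (p.2 : ℕ) + 1 ∨ (q.2 : ℕ) + 1 = (p.2 : ℕ)) then
    (1/4) * min 1 (π q.2 p.1 / π p.2 p.1) else 0)

/-- The simulated tempering chain built from level Metropolis kernels `Mk` and
the tempering distributions `π`. -/
noncomputable def temperingChain {S : Type} [Fintype S] [DecidableEq S] {M : ℕ}
    (Mk : Fin (M+1) → Matrix S S ℝ) (π : Fin (M+1) → S → ℝ) :
    Matrix (S × Fin (M+1)) (S × Fin (M+1)) ℝ :=
  Matrix.of fun p q =>
    if q = p then 1 - ∑ r ∈ Finset.univ.erase p, temperingOff Mk π p r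
    else temperingOff Mk π p q

/-- Conductance of a chain `(P, π)`. -/
noncomputable def conductance {S : Type} [Fintype S] [DecidableEq S]
    (P : Matrix S S ℝ) (π : S → ℝ) : ℝ :=
  sInf {r : ℝ | ∃ A : Finset S, 0 < ∑ x ∈ A, π x ∧ (∑ x ∈ A, π x) ≤ 1/2 ∧
    r = (∑ x ∈ A, ∑ y ∈ Aᶜ, π x * P x y) / ∑ x ∈ A, π x}

/-- Potts Hamiltonian. -/
def pottsH (n : ℕ) (x : Fin n → Fin 3) : ℕ :=
  (Finset.univ.filter (fun p : Fin n × Fin n => p.1 < p.2 ∧ x p.1 = x p.2)).card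

/-- Gibbs distribution of the mean-field 3-state Potts model. -/
noncomputable def pottsGibbs (n : ℕ) (β : ℝ) (x : Fin n → Fin 3) : ℝ :=
  Real.exp (β * pottsH n x) / ∑ y : Fin n → Fin 3, Real.exp (β * pottsH n y)

/-- Proposal: recolor a uniformly random vertex with a uniformly random color. -/
noncomputable def pottsProp (n : ℕ) (x y : Fin n → Fin 3) : ℝ :=
  ((Finset.univ.filter
    (fun vc : Fin n × Fin 3 => Function.update x vc.1 vc.2 = y)).card : ℝ) / (n * 3)


/-- Number of vertices of color `j`. -/
def colorCount (n : ℕ) (x : Fin n → Fin 3) (j : Fin 3) : ℕ :=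
  (Finset.univ.filter (fun i => x i = j)).card

/-- The restricted state space `Ω_RGB = {x : σ₁(x) ≥ σ₂(x) ≥ σ₃(x)}`. -/
def RGBset (n : ℕ) : Finset (Fin n → Fin 3) :=
  Finset.univ.filter
    (fun x => colorCount n x 1 ≤ colorCount n x 0 ∧ colorCount n x 2 ≤ colorCount n x 1)

/-- The Gibbs distribution at inverse temperature `β`, normalized on `Ω_RGB`. -/
noncomputable def gibbsRGB (n : ℕ) (β : ℝ) (x : ↥(RGBset n)) : ℝ :=
  Real.exp (β * pottsH n (x : Fin n → Fin 3)) /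
    ∑ y : ↥(RGBset n), Real.exp (β * pottsH n (y : Fin n → Fin 3))

/-- The recoloring proposal restricted to `Ω_RGB` (moves leaving `Ω_RGB` are
rejected, contributing to the holding probability of the Metropolis chain). -/
noncomputable def propRGB (n : ℕ) (a b : ↥(RGBset n)) : ℝ :=
  pottsProp n (a : Fin n → Fin 3) (b : Fin n → Fin 3)


/-- Mean-field 3-state Potts weight of the class with color counts `σ`:
`w_β(σ) = (n!/(σ₁!·σ₂!·σ₃!))·exp((β/2)(σ₁²+σ₂²+σ₃²))`. -/
noncomputable def pottsWeight (n : ℕ) (β : ℝ) (σ : ℕ × ℕ × ℕ) : ℝ :=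
  ((n.factorial : ℝ) /
      ((σ.1.factorial : ℝ) * (σ.2.1.factorial : ℝ) * (σ.2.2.factorial : ℝ))) *
    Real.exp ((β / 2) * ((σ.1 : ℝ) ^ 2 + (σ.2.1 : ℝ) ^ 2 + (σ.2.2 : ℝ) ^ 2))

/-- The integers `t` with `n/3 ≤ t ≤ n` and `n − t` even: the admissible first color
counts along the line of equal blue and green counts. -/
def tCandidates (n : ℕ) : Finset ℕ :=
  (Finset.Icc (n / 3) n).filter (fun t => 2 ∣ (n - t))

/-- The ordered triples `σ₁ ≥ σ₂ ≥ σ₃` with `σ₁ + σ₂ + σ₃ = n`. -/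
def KRGB (n : ℕ) : Finset (ℕ × ℕ × ℕ) :=
  (Finset.range (n+1) ×ˢ Finset.range (n+1) ×ˢ Finset.range (n+1)).filter
    (fun σ => σ.1 + σ.2.1 + σ.2.2 = n ∧ σ.2.1 ≤ σ.1 ∧ σ.2.2 ≤ σ.2.1)

/-- The flattened weight: classes `σ` with `σ₁ < t_min` whose weight exceeds that of
`σ_min = (t_min,(n−t_min)/2,(n−t_min)/2)` are flattened to the weight of `σ_min`. -/
noncomputable def flatV (n : ℕ) (β : ℝ) (tmin : ℕ) (σ : ℕ × ℕ × ℕ) : ℝ :=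
  if σ.1 < tmin ∧
      pottsWeight n β (tmin, (n - tmin) / 2, (n - tmin) / 2) ≤ pottsWeight n β σ
  then pottsWeight n β (tmin, (n - tmin) / 2, (n - tmin) / 2)
  else pottsWeight n β σ

/-- The flattened distribution `π̃` on `Ω_RGB`: uniform within each class, with class
weights given by `flatV` and normalized by `Z̃ = Σ_{σ ∈ K_RGB} flatV σ`. -/
noncomputable def flatPi (n : ℕ) (β : ℝ) (tmin : ℕ) (x : ↥(RGBset n)) : ℝ :=
  ((((colorCount n (x : Fin n → Fin 3) 0).factorial : ℝ) *
      ((colorCount n (x : Fin n → Fin 3) 1).factorial : ℝ) *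
      ((colorCount n (x : Fin n → Fin 3) 2).factorial : ℝ)) / (n.factorial : ℝ)) *
    flatV n β tmin
      (colorCount n (x : Fin n → Fin 3) 0, colorCount n (x : Fin n → Fin 3) 1,
        colorCount n (x : Fin n → Fin 3) 2) /
    ∑ σ ∈ KRGB n, flatV n β tmin σ

end

/-! ### Reversible chains and the Poincaré inequality -/

/-- `ℓ²(π)` contraction of a reversible chain with holding probability at least `1/3`. -/
theorem l2_contraction {S : Type} [Fintype S] [DecidableEq S]
    (P : Matrix S S ℝ) (π : S → ℝ) (hπ : ∀ x, 0 < π x)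
    (hP : ∀ x y, 0 ≤ P x y) (hrow : ∀ x, ∑ y, P x y = 1)
    (hrev : ∀ x y, π x * P x y = π y * P y x) (hold : ∀ x, 1 / 3 ≤ P x x) (f : S → ℝ) :
    ∑ x, π x * (∑ y, P x y * f y) ^ 2 ≤
      ∑ x, π x * f x ^ 2 - 1 / 3 * ∑ x, ∑ y, π x * P x y * (f x - f y) ^ 2 := by
  -- `R` is the two-step flow `π x * P² x y`, a symmetric kernel with marginals `π`.
  set R : S → S → ℝ := fun x y => ∑ z, π z * P z x * P z y with hR
  have hRrow : ∀ x, ∑ y, R x y = π x := by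
    intro x
    simp only [hR]
    rw [Finset.sum_comm]
    simp only [← Finset.mul_sum, hrow, mul_one]
    rw [Finset.sum_congr rfl (fun z _ => hrev z x), ← Finset.mul_sum, hrow, mul_one]
  have hRsymm : ∀ x y, R x y = R y x := by
    intro x y
    simp only [hR]
    exact Finset.sum_congr rfl fun z _ => by ring
  have hRlow : ∀ x y, x ≠ y → 2 / 3 * (π x * P x y) ≤ R x y := by
    intro x y hxy
    have h1 : ∑ z ∈ ({x, y} : Finset S), π z * P z x * P z y ≤ R x y :=
      Finset.sum_le_sum_of_subset_of_nonneg (Finset.subset_univ _)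
        fun z _ _ => mul_nonneg (mul_nonneg (hπ z).le (hP _ _)) (hP _ _)
    rw [Finset.sum_pair hxy, ← hrev x y] at h1
    have h2 : 0 ≤ π x * P x y := mul_nonneg (hπ x).le (hP _ _)
    nlinarith [hold x, hold y]
  have hlhs : ∑ x, π x * (∑ y, P x y * f y) ^ 2 = ∑ x, ∑ y, R x y * (f x * f y) := by
    have : ∀ z, π z * (∑ y, P z y * f y) ^ 2
        = ∑ x, ∑ y, π z * P z x * P z y * (f x * f y) := by
      intro z
      rw [sq, Finset.sum_mul_sum, Finset.mul_sum]
      refine Finset.sum_congr rfl fun x _ => ?_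
      rw [Finset.mul_sum]
      exact Finset.sum_congr rfl fun y _ => by ring
    rw [Finset.sum_congr rfl fun z _ => this z, Finset.sum_comm]
    refine Finset.sum_congr rfl fun x _ => ?_
    rw [Finset.sum_comm]
    exact Finset.sum_congr rfl fun y _ => by rw [hR, Finset.sum_mul]
  have hsq : ∑ x, ∑ y, R x y * (f x - f y) ^ 2
      = 2 * ∑ x, π x * f x ^ 2 - 2 * ∑ x, ∑ y, R x y * (f x * f y) := by
    have e1 : ∑ x, ∑ y, R x y * f x ^ 2 = ∑ x, π x * f x ^ 2 :=
      Finset.sum_congr rfl fun x _ => by rw [← Finset.sum_mul, hRrow]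
    have e2 : ∑ x, ∑ y, R x y * f y ^ 2 = ∑ x, π x * f x ^ 2 := by
      rw [Finset.sum_comm, ← e1]
      exact Finset.sum_congr rfl fun x _ => Finset.sum_congr rfl fun y _ => by rw [hRsymm]
    have : ∑ x, ∑ y, R x y * (f x - f y) ^ 2 = ∑ x, ∑ y, R x y * f x ^ 2
        + ∑ x, ∑ y, R x y * f y ^ 2 - 2 * ∑ x, ∑ y, R x y * (f x * f y) := by
      simp only [Finset.mul_sum, ← Finset.sum_add_distrib, ← Finset.sum_sub_distrib]
      exact Finset.sum_congr rfl fun x _ => Finset.sum_congr rfl fun y _ => by ring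
    rw [this, e1, e2]; ring
  have hle : 2 / 3 * ∑ x, ∑ y, π x * P x y * (f x - f y) ^ 2
      ≤ ∑ x, ∑ y, R x y * (f x - f y) ^ 2 := by
    simp only [Finset.mul_sum]
    refine Finset.sum_le_sum fun x _ => Finset.sum_le_sum fun y _ => ?_
    by_cases hxy : x = y
    · subst hxy; simp
    · have := mul_le_mul_of_nonneg_right (hRlow x y hxy) (sq_nonneg (f x - f y))
      linarith
  rw [hlhs]; linarith

/-- A Poincaré inequality with constant `C` gives geometric decay, at rate `1/(3C)`, of the
squared `ℓ¹` distance to stationarity, starting from at most `π(x)⁻¹`. -/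
theorem tv_decay {S : Type} [Fintype S] [DecidableEq S]
    (P : Matrix S S ℝ) (π : S → ℝ) (hπ : ∀ x, 0 < π x) (hsum : ∑ x, π x = 1)
    (hP : ∀ x y, 0 ≤ P x y) (hrow : ∀ x, ∑ y, P x y = 1)
    (hrev : ∀ x y, π x * P x y = π y * P y x) (hold : ∀ x, 1 / 3 ≤ P x x)
    (C : ℝ) (hC : 0 < C)
    (hpoin : ∀ f : S → ℝ, ∃ c : ℝ, ∑ x, π x * (f x - c) ^ 2 ≤
      C * ∑ x, ∑ y, π x * P x y * (f x - f y) ^ 2) (t : ℕ) (x : S) :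
    (∑ y, |(P ^ t) x y - π y|) ^ 2 ≤ 1 / π x * Real.exp (-(t / (3 * C))) := by
  set h : ℕ → S → ℝ := fun t y => (P ^ t) x y / π y - 1 with hh
  have hrowt : ∀ t : ℕ, ∑ y, (P ^ t) x y = 1 := by
    intro t
    induction t with
    | zero => simp [Matrix.one_apply]
    | succ k ih =>
      simp only [pow_succ, Matrix.mul_apply]
      rw [Finset.sum_comm]
      simp only [← Finset.mul_sum, hrow, mul_one, ih]
  have hπh : ∀ t y, π y * h t y = (P ^ t) x y - π y := by
    intro t y
    have := (hπ y).ne'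
    simp only [hh]; field_simp
  have hmean : ∀ t, ∑ y, π y * h t y = 0 := by
    intro t
    rw [Finset.sum_congr rfl fun y _ => hπh t y, Finset.sum_sub_distrib, hrowt, hsum, sub_self]
  have hstep : ∀ t y, ∑ z, P y z * h t z = h (t + 1) y := by
    intro t y
    simp only [hh, mul_sub, mul_one, Finset.sum_sub_distrib, hrow]
    congr 1
    rw [pow_succ, Matrix.mul_apply, Finset.sum_div]
    refine Finset.sum_congr rfl fun z _ => ?_
    have h1 := (hπ y).ne'
    have h2 := (hπ z).ne'
    field_simp
    linear_combination (P ^ t) x z * hrev y z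
  have hE : ∀ t : ℕ, ∑ y, π y * h t y ^ 2 ≤ 1 / π x * Real.exp (-(t / (3 * C))) := by
    intro t
    induction t with
    | zero =>
      have e : ∀ y, π y * h 0 y ^ 2 = (if x = y then 1 / π x - 2 else 0) + π y := by
        intro y
        have h1 := (hπ y).ne'
        by_cases hxy : x = y
        · subst hxy
          simp [hh]; field_simp; ring
        · simp [hh, hxy]
      rw [Finset.sum_congr rfl fun y _ => e y, Finset.sum_add_distrib, hsum]
      simp
      linarith
    | succ k ih =>
      have hc := l2_contraction P π hπ hP hrow hrev hold (h k)
      simp only [hstep] at hc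
      obtain ⟨c, hc'⟩ := hpoin (h k)
      have hvar : ∑ y, π y * (h k y - c) ^ 2 = ∑ y, π y * h k y ^ 2 + c ^ 2 := by
        have : ∑ y, π y * (h k y - c) ^ 2
            = ∑ y, π y * h k y ^ 2 - 2 * c * ∑ y, π y * h k y + c ^ 2 * ∑ y, π y := by
          simp only [Finset.mul_sum, ← Finset.sum_add_distrib, ← Finset.sum_sub_distrib]
          exact Finset.sum_congr rfl fun y _ => by ring
        rw [this, hmean, hsum]; ring
      have hge0 : 0 ≤ ∑ y, π y * h k y ^ 2 :=
        Finset.sum_nonneg fun y _ => mul_nonneg (hπ y).le (sq_nonneg _)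
      have hD : (∑ y, π y * h k y ^ 2) / C ≤ ∑ a, ∑ y, π a * P a y * (h k a - h k y) ^ 2 := by
        rw [div_le_iff₀ hC]
        nlinarith [sq_nonneg c]
      have h1 : ∑ y, π y * h (k + 1) y ^ 2 ≤ (∑ y, π y * h k y ^ 2) * (1 - 1 / (3 * C)) := by
        have : (∑ y, π y * h k y ^ 2) * (1 - 1 / (3 * C))
          = ∑ y, π y * h k y ^ 2 - 1 / 3 * ((∑ y, π y * h k y ^ 2) / C) := by
          field_simp
        rw [this]; linarith
      have h2 : 1 - 1 / (3 * C) ≤ Real.exp (-(1 / (3 * C))) := by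
        have := Real.add_one_le_exp (-(1 / (3 * C)))
        linarith
      calc _ ≤ (∑ y, π y * h k y ^ 2) * Real.exp (-(1 / (3 * C))) :=
            h1.trans (mul_le_mul_of_nonneg_left h2 hge0)
        _ ≤ (1 / π x * Real.exp (-(k / (3 * C)))) * Real.exp (-(1 / (3 * C))) :=
            mul_le_mul_of_nonneg_right ih (Real.exp_pos _).le
        _ = _ := by
            rw [mul_assoc, ← Real.exp_add]
            congr 2; push_cast; ring
  refine le_trans ?_ (hE t)
  have hcs := Finset.sum_sq_le_sum_mul_sum_of_sq_le_mul (Finset.univ : Finset S)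
    (r := fun y => |(P ^ t) x y - π y|) (f := π) (g := fun y => π y * h t y ^ 2)
    (fun y _ => (hπ y).le) (fun y _ => mul_nonneg (hπ y).le (sq_nonneg _))
    (fun y _ => by rw [sq_abs, ← hπh]; exact le_of_eq (by ring))
  rwa [hsum, one_mul] at hcs

/-- The basic facts on a Metropolis chain whose proposal is symmetric and moves with
probability at most `2/3`. -/
theorem metropolis_props {S : Type} [Fintype S] [DecidableEq S]
    (Q : S → S → ℝ) (π : S → ℝ) (hπ : ∀ x, 0 < π x) (hQ : ∀ x y, 0 ≤ Q x y)
    (hQs : ∀ x y, Q x y = Q y x) (hQm : ∀ x, ∑ z ∈ Finset.univ.erase x, Q x z ≤ 2 / 3) :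
    (∀ x y, 0 ≤ metropolis Q π x y) ∧ (∀ x, ∑ y, metropolis Q π x y = 1) ∧
    (∀ x y, π x * metropolis Q π x y = π y * metropolis Q π y x) ∧
    (∀ x, 1 / 3 ≤ metropolis Q π x x) ∧
    (∀ x y, x ≠ y → π x * metropolis Q π x y = Q x y * min (π x) (π y)) := by
  have hoff : ∀ x y, x ≠ y → π x * metropolis Q π x y = Q x y * min (π x) (π y) := by
    intro x y hxy
    have h1 := (hπ x).ne'
    simp only [metropolis, Matrix.of_apply, if_neg hxy.symm]
    rw [mul_left_comm, mul_min_of_nonneg _ _ (hπ x).le, mul_one, mul_div_cancel₀ _ h1]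
  have hhold : ∀ x, 1 / 3 ≤ metropolis Q π x x := by
    intro x
    simp only [metropolis, Matrix.of_apply, if_true]
    have : ∑ z ∈ Finset.univ.erase x, Q x z * min 1 (π z / π x)
        ≤ ∑ z ∈ Finset.univ.erase x, Q x z :=
      Finset.sum_le_sum fun z _ => mul_le_of_le_one_right (hQ x z) (min_le_left _ _)
    linarith [hQm x]
  refine ⟨?_, ?_, ?_, hhold, hoff⟩
  · intro x y
    by_cases hxy : y = x
    · subst hxy; linarith [hhold y]
    · simp only [metropolis, Matrix.of_apply, if_neg hxy]
      exact mul_nonneg (hQ x y) (le_min zero_le_one (div_nonneg (hπ y).le (hπ x).le))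
  · intro x
    rw [← Finset.add_sum_erase _ _ (Finset.mem_univ x)]
    have : ∑ z ∈ Finset.univ.erase x, metropolis Q π x z
        = ∑ z ∈ Finset.univ.erase x, Q x z * min 1 (π z / π x) :=
      Finset.sum_congr rfl fun z hz => by
        simp only [metropolis, Matrix.of_apply, if_neg (Finset.ne_of_mem_erase hz)]
    rw [this]
    simp only [metropolis, Matrix.of_apply, if_true]
    ring
  · intro x y
    by_cases hxy : x = y
    · subst hxy; rfl
    · rw [hoff x y hxy, hoff y x (Ne.symm hxy), hQs, min_comm]

/-! ### Color-count classes and recolorings -/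

/-- The triple of color counts of a configuration. -/
def cnt (n : ℕ) (x : Fin n → Fin 3) : ℕ × ℕ × ℕ :=
  (colorCount n x 0, colorCount n x 1, colorCount n x 2)

/-- A triple read as a function of the color. -/
def tri (σ : ℕ × ℕ × ℕ) : Fin 3 → ℕ := ![σ.1, σ.2.1, σ.2.2]

/-- The class of all configurations with color counts `σ`. -/
def cls (n : ℕ) (σ : ℕ × ℕ × ℕ) : Finset (Fin n → Fin 3) :=
  Finset.univ.filter (fun x => cnt n x = σ)

/-- `Move a b σ σ'`: the triple `σ'` arises from `σ` by recoloring one vertex of color `b`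
with color `a ≠ b`. -/
def Move (a b : Fin 3) (σ σ' : ℕ × ℕ × ℕ) : Prop :=
  a ≠ b ∧ tri σ b = tri σ' b + 1 ∧ tri σ' a = tri σ a + 1 ∧
    ∀ j, j ≠ a → j ≠ b → tri σ' j = tri σ j

theorem Move.symm {a b : Fin 3} {σ σ' : ℕ × ℕ × ℕ} (h : Move a b σ σ') : Move b a σ' σ :=
  ⟨h.1.symm, h.2.2.1, h.2.1, fun j h1 h2 => (h.2.2.2 j h2 h1).symm⟩

theorem tri_injective {σ σ' : ℕ × ℕ × ℕ} (h : ∀ j, tri σ j = tri σ' j) : σ = σ' := by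
  have h0 := h 0
  have h1 := h 1
  have h2 := h 2
  simp [tri] at h0 h1 h2
  ext <;> assumption

theorem tri_cnt (n : ℕ) (x : Fin n → Fin 3) (j : Fin 3) : tri (cnt n x) j = colorCount n x j := by
  fin_cases j <;> simp [tri, cnt]

theorem mem_cls {n : ℕ} {σ : ℕ × ℕ × ℕ} {x : Fin n → Fin 3} : x ∈ cls n σ ↔ cnt n x = σ := by
  simp [cls]

theorem colorCount_sum (n : ℕ) (x : Fin n → Fin 3) :
    colorCount n x 0 + colorCount n x 1 + colorCount n x 2 = n := by
  have h := Finset.card_eq_sum_card_fiberwise (f := x) (s := Finset.univ) (t := Finset.univ)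
    (fun i _ => Finset.mem_univ _)
  rw [Fin.sum_univ_three] at h
  simpa [colorCount] using h.symm

theorem colorCount_update_new (n : ℕ) (x : Fin n → Fin 3) (i : Fin n) (a : Fin 3)
    (h : x i ≠ a) : colorCount n (Function.update x i a) a = colorCount n x a + 1 := by
  unfold colorCount
  rw [← Finset.card_insert_of_notMem (s := Finset.univ.filter (fun k => x k = a)) (a := i)
    (by simpa using h)]
  congr 1
  ext k
  by_cases hk : k = i
  · subst hk; simp
  · simp [hk]

theorem colorCount_update_other (n : ℕ) (x : Fin n → Fin 3) (i : Fin n) (a j : Fin 3)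
    (hja : j ≠ a) (hj : j ≠ x i) : colorCount n (Function.update x i a) j = colorCount n x j := by
  unfold colorCount
  congr 1
  ext k
  by_cases hk : k = i
  · subst hk; simp [hja.symm, hj.symm]
  · simp [Function.update_of_ne hk]

theorem move_update (n : ℕ) (x : Fin n → Fin 3) (i : Fin n) (a : Fin 3) (h : x i ≠ a) :
    Move a (x i) (cnt n x) (cnt n (Function.update x i a)) := by
  refine ⟨h.symm, ?_, ?_, ?_⟩
  · simp only [tri_cnt]
    have := colorCount_update_new n (Function.update x i a) i (x i) (by simpa using h.symm)
    simpa using this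
  · simp only [tri_cnt]
    exact colorCount_update_new n x i a h
  · intro j hja hjb
    simp only [tri_cnt]
    exact colorCount_update_other n x i a j hja hjb

theorem Move.eq_of_left {a b : Fin 3} {σ σ₁ σ₂ : ℕ × ℕ × ℕ} (h₁ : Move a b σ σ₁)
    (h₂ : Move a b σ σ₂) : σ₁ = σ₂ := by
  refine tri_injective fun j => ?_
  obtain ⟨-, p1, p2, p3⟩ := h₁
  obtain ⟨-, q1, q2, q3⟩ := h₂
  by_cases ja : j = a
  · subst ja; omega
  by_cases jb : j = b
  · subst jb; omega
  rw [p3 j ja jb, q3 j ja jb]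

/-- Double counting of the edges between two neighboring classes. -/
theorem edge_sum {n : ℕ} {a b : Fin 3} {σ σ' : ℕ × ℕ × ℕ} (h : Move a b σ σ')
    (g : (Fin n → Fin 3) → (Fin n → Fin 3) → ℝ) :
    ∑ x ∈ cls n σ, ∑ i ∈ Finset.univ.filter (fun i => x i = b), g x (Function.update x i a) =
    ∑ y ∈ cls n σ', ∑ i ∈ Finset.univ.filter (fun i => y i = a),
      g (Function.update y i b) y := by
  rw [Finset.sum_sigma', Finset.sum_sigma']
  have key : ∀ {a b : Fin 3} {σ σ' : ℕ × ℕ × ℕ}, Move a b σ σ' → ∀ x ∈ cls n σ, ∀ i : Fin n,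
      x i = b → Function.update x i a ∈ cls n σ' := by
    intro a b σ σ' h x hx i hi
    rw [mem_cls] at hx ⊢
    have := move_update n x i a (by rw [hi]; exact h.1.symm)
    rw [hi, hx] at this
    exact this.eq_of_left h
  refine Finset.sum_bij' (fun p _ => ⟨Function.update p.1 p.2 a, p.2⟩)
    (fun p _ => ⟨Function.update p.1 p.2 b, p.2⟩) ?_ ?_ ?_ ?_ ?_
  · rintro ⟨x, i⟩ hp
    simp only [Finset.mem_sigma, Finset.mem_filter, Finset.mem_univ, true_and] at hp ⊢
    exact ⟨key h x hp.1 i hp.2, by simp⟩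
  · rintro ⟨x, i⟩ hp
    simp only [Finset.mem_sigma, Finset.mem_filter, Finset.mem_univ, true_and] at hp ⊢
    exact ⟨key h.symm x hp.1 i hp.2, by simp⟩
  · rintro ⟨x, i⟩ hp
    simp only [Finset.mem_sigma, Finset.mem_filter, Finset.mem_univ, true_and] at hp
    simp [← hp.2]
  · rintro ⟨x, i⟩ hp
    simp only [Finset.mem_sigma, Finset.mem_filter, Finset.mem_univ, true_and] at hp
    simp [← hp.2]
  · rintro ⟨x, i⟩ hp
    simp only [Finset.mem_sigma, Finset.mem_filter, Finset.mem_univ, true_and] at hp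
    simp [← hp.2]

theorem card_color_cls {n : ℕ} {σ : ℕ × ℕ × ℕ} {x : Fin n → Fin 3} (hx : x ∈ cls n σ)
    (b : Fin 3) : (Finset.univ.filter (fun i => x i = b)).card = tri σ b := by
  rw [mem_cls] at hx
  rw [← hx, tri_cnt]; rfl

theorem edge_card {n : ℕ} {a b : Fin 3} {σ σ' : ℕ × ℕ × ℕ} (h : Move a b σ σ') :
    ((cls n σ).card : ℝ) * tri σ b = (cls n σ').card * tri σ' a := by
  have h1 := edge_sum (n := n) h (fun _ _ => 1)
  rw [Finset.sum_congr rfl fun x hx => by rw [Finset.sum_const, card_color_cls hx b],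
    Finset.sum_congr (s₁ := cls n σ') rfl fun x hx => by
      rw [Finset.sum_const, card_color_cls hx a]] at h1
  simpa using h1

theorem edge_card_nat {n : ℕ} {a b : Fin 3} {σ σ' : ℕ × ℕ × ℕ} (h : Move a b σ σ') :
    (cls n σ).card * tri σ b = (cls n σ').card * tri σ' a := by
  exact_mod_cast edge_card (n := n) h

/-- The size of a class is the multinomial coefficient. -/
theorem card_cls (n : ℕ) (σ : ℕ × ℕ × ℕ) (hσ : σ.1 + σ.2.1 + σ.2.2 = n) :
    (cls n σ).card * (σ.1.factorial * σ.2.1.factorial * σ.2.2.factorial) = n.factorial := by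
  obtain ⟨p, q, r⟩ := σ
  simp only at hσ ⊢
  induction q generalizing p with
  | zero =>
    induction r generalizing p with
    | zero =>
      have : cls n (p, 0, 0) = {fun _ => 0} := by
        ext x
        rw [mem_cls, Finset.mem_singleton]
        constructor
        · intro h
          simp only [cnt, Prod.mk.injEq, colorCount, Finset.card_eq_zero,
            Finset.filter_eq_empty_iff, Finset.mem_univ, true_imp_iff] at h
          funext i
          have h1 := @h.2.1 i
          have h2 := @h.2.2 i
          generalize x i = y at *
          fin_cases y <;> simp_all
        · rintro rfl
          have : p = n := by omega
          simp [cnt, colorCount, this]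
      rw [this]
      have : p = n := by omega
      simp [this]
    | succ r ih =>
      have hm : Move 0 2 (p, 0, r + 1) (p + 1, 0, r) := by
        refine ⟨by decide, rfl, rfl, ?_⟩
        intro j; fin_cases j <;> simp [tri]
      have h1 := edge_card_nat (n := n) hm
      have h2 := ih (p + 1) (by omega)
      simp only [tri, Matrix.cons_val] at h1
      rw [← h2, Nat.factorial_succ r, Nat.factorial_succ p]
      linear_combination (p.factorial * Nat.factorial 0 * r.factorial) * h1
  | succ q ih =>
    have hm : Move 0 1 (p, q + 1, r) (p + 1, q, r) := by
      refine ⟨by decide, rfl, rfl, ?_⟩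
      intro j; fin_cases j <;> simp [tri]
    have h1 := edge_card_nat (n := n) hm
    have h2 := ih (p + 1) (by omega)
    simp only [tri, Matrix.cons_val] at h1
    rw [← h2, Nat.factorial_succ q, Nat.factorial_succ p]
    linear_combination (p.factorial * q.factorial * r.factorial) * h1

theorem pottsProp_symm (n : ℕ) (x y : Fin n → Fin 3) : pottsProp n x y = pottsProp n y x := by
  unfold pottsProp
  congr 2
  refine Finset.card_bij' (fun p _ => (p.1, x p.1)) (fun p _ => (p.1, y p.1)) ?_ ?_ ?_ ?_
  · rintro ⟨i, c⟩ h
    simp only [Finset.mem_filter, Finset.mem_univ, true_and] at h ⊢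
    rw [← h]; simp
  · rintro ⟨i, c⟩ h
    simp only [Finset.mem_filter, Finset.mem_univ, true_and] at h ⊢
    rw [← h]; simp
  · rintro ⟨i, c⟩ h
    simp only [Finset.mem_filter, Finset.mem_univ, true_and] at h ⊢
    rw [← h]; simp
  · rintro ⟨i, c⟩ h
    simp only [Finset.mem_filter, Finset.mem_univ, true_and] at h ⊢
    rw [← h]; simp

theorem pottsProp_nonneg (n : ℕ) (x y : Fin n → Fin 3) : 0 ≤ pottsProp n x y := by
  unfold pottsProp; positivity

theorem propRGB_move_le (n : ℕ) (hn : 0 < n) (x : ↥(RGBset n)) :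
    ∑ z ∈ Finset.univ.erase x, propRGB n x z ≤ 2 / 3 := by
  have hn' : (0 : ℝ) < n := by exact_mod_cast hn
  unfold propRGB pottsProp
  rw [← Finset.sum_div, div_le_iff₀ (by positivity), ← Nat.cast_sum]
  have hle : ∑ z ∈ Finset.univ.erase x, (Finset.univ.filter
      (fun vc : Fin n × Fin 3 => Function.update (x : Fin n → Fin 3) vc.1 vc.2 = z)).card
      ≤ 2 * n := by
    rw [← Finset.card_biUnion]
    · have hsub : (Finset.univ.erase x).biUnion (fun z : ↥(RGBset n) => Finset.univ.filter
          (fun vc : Fin n × Fin 3 => Function.update (x : Fin n → Fin 3) vc.1 vc.2 = z))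
          ⊆ Finset.univ \ Finset.univ.image (fun i : Fin n => (i, (x : Fin n → Fin 3) i)) := by
        rintro ⟨i, c⟩ h
        simp only [Finset.mem_biUnion, Finset.mem_erase, Finset.mem_filter, Finset.mem_univ,
          true_and, and_true] at h
        obtain ⟨z, hz, h⟩ := h
        simp only [Finset.mem_sdiff, Finset.mem_univ, true_and, Finset.mem_image,
          Prod.mk.injEq, not_exists, not_and]
        rintro j rfl hc
        apply hz
        apply Subtype.ext
        rw [← h, ← hc]; simp
      refine (Finset.card_le_card hsub).trans ?_
      rw [Finset.card_sdiff_of_subset (Finset.subset_univ _), Finset.card_image_of_injective _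
        (fun i j h => (Prod.mk.inj h).1)]
      simp; omega
    · intro z _ z' _ hzz'
      rw [Function.onFun, Finset.disjoint_left]
      rintro ⟨i, c⟩ h h'
      simp only [Finset.mem_filter, Finset.mem_univ, true_and] at h h'
      exact hzz' (Subtype.ext (h.symm.trans h'))
  have : ((∑ z ∈ Finset.univ.erase x, (Finset.univ.filter
      (fun vc : Fin n × Fin 3 => Function.update (x : Fin n → Fin 3) vc.1 vc.2 = z)).card : ℕ) : ℝ)
      ≤ ((2 * n : ℕ) : ℝ) := by exact_mod_cast hle
  push_cast at this ⊢
  linarith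

/-! ### Transport of the mean square deviation along paths of classes -/

/-- The probability of a configuration when the class weights are `v` with total `Z`, spread
uniformly within each class. -/
noncomputable def confPi (n : ℕ) (v : ℕ × ℕ × ℕ → ℝ) (Z : ℝ) (x : Fin n → Fin 3) : ℝ :=
  v (cnt n x) / ((cls n (cnt n x)).card * Z)

/-- The unnormalized Dirichlet form of single-vertex recolorings inside `Ω_RGB`. -/
noncomputable def dirForm (n : ℕ) (v : ℕ × ℕ × ℕ → ℝ) (Z : ℝ) (F : (Fin n → Fin 3) → ℝ) : ℝ :=
  ∑ x ∈ RGBset n, ∑ i : Fin n, ∑ a : Fin 3,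
    if Function.update x i a ∈ RGBset n then
      min (confPi n v Z x) (confPi n v Z (Function.update x i a)) *
        (F x - F (Function.update x i a)) ^ 2
    else 0

/-- The mean square deviation of `F` from `c` over the class `σ`. -/
noncomputable def msd (n : ℕ) (F : (Fin n → Fin 3) → ℝ) (c : ℝ) (σ : ℕ × ℕ × ℕ) : ℝ :=
  (∑ x ∈ cls n σ, (F x - c) ^ 2) / (cls n σ).card

/-- `Climb n v c m σ τ`: there is a path of `m` single recolorings from `σ` to `τ` inside
`K_RGB` all of whose points have weight at least `c`. -/
inductive Climb (n : ℕ) (v : ℕ × ℕ × ℕ → ℝ) (c : ℝ) : ℕ → ℕ × ℕ × ℕ → ℕ × ℕ × ℕ → Prop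
  | refl (σ : ℕ × ℕ × ℕ) : σ ∈ KRGB n → c ≤ v σ → Climb n v c 0 σ σ
  | step (a b : Fin 3) (σ σ' τ : ℕ × ℕ × ℕ) (m : ℕ) : σ ∈ KRGB n → c ≤ v σ → Move a b σ σ' →
      Climb n v c m σ' τ → Climb n v c (m + 1) σ τ

theorem Climb.left_mem {n : ℕ} {v : ℕ × ℕ × ℕ → ℝ} {c : ℝ} {m : ℕ} {σ τ : ℕ × ℕ × ℕ}
    (h : Climb n v c m σ τ) : σ ∈ KRGB n ∧ c ≤ v σ := by
  cases h <;> exact ⟨by assumption, by assumption⟩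

theorem Climb.right_mem {n : ℕ} {v : ℕ × ℕ × ℕ → ℝ} {c : ℝ} {m : ℕ} {σ τ : ℕ × ℕ × ℕ}
    (h : Climb n v c m σ τ) : τ ∈ KRGB n ∧ c ≤ v τ := by
  induction h with
  | refl σ h1 h2 => exact ⟨h1, h2⟩
  | step a b σ σ' τ m h1 h2 h3 h4 ih => exact ih

theorem Climb.trans {n : ℕ} {v : ℕ × ℕ × ℕ → ℝ} {c : ℝ} {m m' : ℕ} {σ τ υ : ℕ × ℕ × ℕ}
    (h : Climb n v c m σ τ) (h' : Climb n v c m' τ υ) : Climb n v c (m + m') σ υ := by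
  induction h with
  | refl σ h1 h2 => rw [Nat.zero_add]; exact h'
  | step a b σ σ' τ m h1 h2 h3 h4 ih =>
    rw [Nat.add_right_comm]
    exact Climb.step a b _ _ _ _ h1 h2 h3 (ih h')

theorem mem_KRGB {n : ℕ} {σ : ℕ × ℕ × ℕ} :
    σ ∈ KRGB n ↔ σ.1 + σ.2.1 + σ.2.2 = n ∧ σ.2.1 ≤ σ.1 ∧ σ.2.2 ≤ σ.2.1 := by
  simp only [KRGB, Finset.mem_filter, Finset.mem_product, Finset.mem_range]
  constructor
  · exact fun h => h.2
  · exact fun h => ⟨⟨by omega, by omega, by omega⟩, h⟩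

theorem mem_RGBset_iff {n : ℕ} {x : Fin n → Fin 3} : x ∈ RGBset n ↔ cnt n x ∈ KRGB n := by
  rw [mem_KRGB]
  have := colorCount_sum n x
  simp [RGBset, cnt, this]

theorem cls_subset {n : ℕ} {σ : ℕ × ℕ × ℕ} (h : σ ∈ KRGB n) : cls n σ ⊆ RGBset n := by
  intro x hx
  rw [mem_cls] at hx
  rw [mem_RGBset_iff, hx]; exact h

theorem card_cls_pos {n : ℕ} {σ : ℕ × ℕ × ℕ} (h : σ ∈ KRGB n) : 0 < (cls n σ).card := by
  have := card_cls n σ (mem_KRGB.1 h).1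
  rcases Nat.eq_zero_or_pos (cls n σ).card with h0 | h0
  · rw [h0, zero_mul] at this
    exact absurd this.symm (Nat.factorial_ne_zero n)
  · exact h0

theorem confPi_pos {n : ℕ} {v : ℕ × ℕ × ℕ → ℝ} {Z : ℝ}
    (hv : ∀ σ ∈ KRGB n, 0 < v σ) (hZ : 0 < Z)
    {x : Fin n → Fin 3} (hx : x ∈ RGBset n) : 0 < confPi n v Z x := by
  have h := mem_RGBset_iff.1 hx
  have : (0 : ℝ) < (cls n (cnt n x)).card := by exact_mod_cast card_cls_pos h
  exact div_pos (hv _ h) (mul_pos this hZ)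

theorem dirForm_term_nonneg {n : ℕ} {v : ℕ × ℕ × ℕ → ℝ} {Z : ℝ}
    (hv : ∀ σ ∈ KRGB n, 0 < v σ) (hZ : 0 < Z) (F : (Fin n → Fin 3) → ℝ)
    {x : Fin n → Fin 3} (hx : x ∈ RGBset n) (i : Fin n) (a : Fin 3) :
    0 ≤ if Function.update x i a ∈ RGBset n then
      min (confPi n v Z x) (confPi n v Z (Function.update x i a)) *
        (F x - F (Function.update x i a)) ^ 2
    else 0 := by
  split_ifs with h
  · exact mul_nonneg (le_min (confPi_pos hv hZ hx).le (confPi_pos hv hZ h).le) (sq_nonneg _)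
  · exact le_rfl

theorem dirForm_nonneg {n : ℕ} {v : ℕ × ℕ × ℕ → ℝ} {Z : ℝ}
    (hv : ∀ σ ∈ KRGB n, 0 < v σ) (hZ : 0 < Z) (F : (Fin n → Fin 3) → ℝ) : 0 ≤ dirForm n v Z F :=
  Finset.sum_nonneg fun _ hx => Finset.sum_nonneg fun i _ => Finset.sum_nonneg fun a _ =>
    dirForm_term_nonneg hv hZ F hx i a

/-- The energy across a pair of neighboring classes of weight at least `c` is part of the
Dirichlet form. -/
theorem edge_le_dirForm {n : ℕ} {v : ℕ × ℕ × ℕ → ℝ} {Z : ℝ}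
    (hv : ∀ σ ∈ KRGB n, 0 < v σ) (hZ : 0 < Z) (F : (Fin n → Fin 3) → ℝ)
    {a b : Fin 3} {σ σ' : ℕ × ℕ × ℕ} (h : Move a b σ σ')
    (hσ : σ ∈ KRGB n) (hσ' : σ' ∈ KRGB n) {c : ℝ} (hc : 0 < c) (h1 : c ≤ v σ) (h2 : c ≤ v σ') :
    (∑ x ∈ cls n σ, ∑ i ∈ Finset.univ.filter (fun i => x i = b),
      (F x - F (Function.update x i a)) ^ 2) ≤
      (cls n σ).card * tri σ b * (Z * dirForm n v Z F / c) := by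
  have hN : (0 : ℝ) < (cls n σ).card := by exact_mod_cast card_cls_pos hσ
  have hN' : (0 : ℝ) < (cls n σ').card := by exact_mod_cast card_cls_pos hσ'
  have hb : (1 : ℝ) ≤ tri σ b := by exact_mod_cast (by have := h.2.1; omega : 1 ≤ tri σ b)
  have ha : (1 : ℝ) ≤ tri σ' a := by exact_mod_cast (by have := h.2.2.1; omega : 1 ≤ tri σ' a)
  set M : ℝ := (cls n σ).card * tri σ b with hM
  have hMpos : 0 < M := by positivity
  have hM1 : (cls n σ).card ≤ M := le_mul_of_one_le_right hN.le hb
  have hM2 : (cls n σ').card ≤ M := by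
    rw [hM, edge_card h]; exact le_mul_of_one_le_right hN'.le ha
  have key : (∑ x ∈ cls n σ, ∑ i ∈ Finset.univ.filter (fun i => x i = b),
      c / (M * Z) * (F x - F (Function.update x i a)) ^ 2) ≤ dirForm n v Z F := by
    unfold dirForm
    refine le_trans ?_ (Finset.sum_le_sum_of_subset_of_nonneg (cls_subset hσ) ?_)
    · refine Finset.sum_le_sum fun x hx => ?_
      have hxR := cls_subset hσ hx
      refine le_trans ?_ (Finset.sum_le_sum_of_subset_of_nonneg
        (Finset.filter_subset (fun i => x i = b) _)
        fun i _ _ => Finset.sum_nonneg fun a _ => dirForm_term_nonneg hv hZ F hxR i a)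
      refine Finset.sum_le_sum fun i hi => ?_
      refine le_trans ?_ (Finset.single_le_sum
        (fun a _ => dirForm_term_nonneg hv hZ F hxR i a) (Finset.mem_univ a))
      have hi' : x i = b := by simpa using hi
      have hmv := move_update n x i a (by rw [hi']; exact h.1.symm)
      rw [hi', mem_cls.1 hx] at hmv
      have hy := hmv.eq_of_left h
      have hyR : Function.update x i a ∈ RGBset n := by rw [mem_RGBset_iff, hy]; exact hσ'
      rw [if_pos hyR]
      refine mul_le_mul_of_nonneg_right (le_min ?_ ?_) (sq_nonneg _)
      · unfold confPi
        rw [mem_cls.1 hx]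
        have := hv σ hσ
        gcongr
      · unfold confPi
        rw [hy]
        have := hv σ' hσ'
        gcongr
    · intro x hx _
      exact Finset.sum_nonneg fun i _ => Finset.sum_nonneg fun a _ =>
        dirForm_term_nonneg hv hZ F hx i a
  simp only [← Finset.mul_sum] at key
  rw [div_mul_eq_mul_div, div_le_iff₀ (by positivity)] at key
  rw [← mul_div_assoc, le_div_iff₀ hc]
  linarith

theorem msd_step {n : ℕ} {v : ℕ × ℕ × ℕ → ℝ} {Z : ℝ}
    (hv : ∀ σ ∈ KRGB n, 0 < v σ) (hZ : 0 < Z) (F : (Fin n → Fin 3) → ℝ)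
    {a b : Fin 3} {σ σ' : ℕ × ℕ × ℕ} (h : Move a b σ σ')
    (hσ : σ ∈ KRGB n) (hσ' : σ' ∈ KRGB n) {c : ℝ} (hc : 0 < c) (h1 : c ≤ v σ) (h2 : c ≤ v σ')
    (d : ℝ) (k : ℕ) :
    msd n F d σ ≤ (k + 2) / (k + 1) * msd n F d σ' + (k + 2) * (Z * dirForm n v Z F / c) := by
  have hN : (0 : ℝ) < (cls n σ).card := by exact_mod_cast card_cls_pos hσ
  have hN' : (0 : ℝ) < (cls n σ').card := by exact_mod_cast card_cls_pos hσ'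
  have hb : (1 : ℝ) ≤ tri σ b := by exact_mod_cast (by have := h.2.1; omega : 1 ≤ tri σ b)
  have hedge := edge_le_dirForm hv hZ F h hσ hσ' hc h1 h2
  set e := Z * dirForm n v Z F / c
  set M : ℝ := (cls n σ).card * tri σ b with hM
  have hMpos : 0 < M := by positivity
  have eL : ∑ x ∈ cls n σ, ∑ i ∈ Finset.univ.filter (fun i => x i = b), (F x - d) ^ 2
      = M * msd n F d σ := by
    rw [Finset.sum_congr rfl fun x hx => by
      rw [Finset.sum_const, card_color_cls hx b, nsmul_eq_mul], ← Finset.mul_sum, hM, msd]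
    field_simp
  have eR : ∑ x ∈ cls n σ, ∑ i ∈ Finset.univ.filter (fun i => x i = b),
      (F (Function.update x i a) - d) ^ 2 = M * msd n F d σ' := by
    rw [edge_sum h (fun _ y => (F y - d) ^ 2), Finset.sum_congr rfl fun x hx => by
      rw [Finset.sum_const, card_color_cls hx a, nsmul_eq_mul], ← Finset.mul_sum, hM,
      edge_card h, msd]
    field_simp
  have hk : (0 : ℝ) < k + 1 := by positivity
  have hpt : ∀ p q : ℝ, (p - d) ^ 2 ≤ (k + 2) / (k + 1) * (q - d) ^ 2 + (k + 2) * (p - q) ^ 2 := by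
    intro p q
    have : (k + 2) / (k + 1) * (q - d) ^ 2 + (k + 2) * (p - q) ^ 2 - (p - d) ^ 2
        = ((q - d) - (k + 1) * (p - q)) ^ 2 / (k + 1) := by
      field_simp; ring
    have h0 : 0 ≤ ((q - d) - (k + 1) * (p - q)) ^ 2 / (k + 1) := by positivity
    linarith
  have hsum : M * msd n F d σ ≤ (k + 2) / (k + 1) * (M * msd n F d σ') + (k + 2) * (M * e) := by
    rw [← eL, ← eR]
    refine le_trans ?_ (add_le_add_right (mul_le_mul_of_nonneg_left hedge
      (by positivity : (0 : ℝ) ≤ k + 2)) _)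
    simp only [Finset.mul_sum, ← Finset.sum_add_distrib]
    exact Finset.sum_le_sum fun x _ => Finset.sum_le_sum fun i _ => hpt _ _
  have : M * msd n F d σ ≤ M * ((k + 2) / (k + 1) * msd n F d σ' + (k + 2) * e) := by
    linarith
  exact le_of_mul_le_mul_left this hMpos

/-- Transport of the mean square deviation along a climbing path. -/
theorem msd_climb {n : ℕ} {v : ℕ × ℕ × ℕ → ℝ} {Z : ℝ}
    (hv : ∀ σ ∈ KRGB n, 0 < v σ) (hZ : 0 < Z) (F : (Fin n → Fin 3) → ℝ)
    {c : ℝ} (hc : 0 < c) (d : ℝ) {m : ℕ} {σ τ : ℕ × ℕ × ℕ}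
    (h : Climb n v c m σ τ) :
    msd n F d σ ≤ (m + 1) * (msd n F d τ + m * (Z * dirForm n v Z F / c)) := by
  induction h with
  | refl σ h1 h2 => simp
  | step a b σ σ' τ m h1 h2 h3 h4 ih =>
    have hs := msd_step hv hZ F h3 h1 h4.left_mem.1 hc h2 h4.left_mem.2 d m
    set e := Z * dirForm n v Z F / c
    have hm : (0 : ℝ) < m + 1 := by positivity
    have := mul_le_mul_of_nonneg_left ih (by positivity : (0 : ℝ) ≤ (m + 2) / (m + 1))
    have e1 : (m + 2 : ℝ) / (m + 1) * ((m + 1) * (msd n F d τ + m * e))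
        = (m + 2) * (msd n F d τ + m * e) := by field_simp
    rw [e1] at this
    push_cast
    linarith

/-! ### The variance inside an interior class -/

theorem cnt_comp_perm {n : ℕ} (x : Fin n → Fin 3) (π : Equiv.Perm (Fin n)) :
    cnt n (x ∘ π) = cnt n x := by
  have : ∀ j, colorCount n (x ∘ π) j = colorCount n x j := by
    intro j
    unfold colorCount
    refine Finset.card_bij' (fun i _ => π i) (fun i _ => π.symm i) ?_ ?_ ?_ ?_
    · intro i hi; simpa using hi
    · intro i hi; simpa using hi
    · intro i _; simp
    · intro i _; simp
  simp [cnt, this]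

theorem sum_cls_comp_perm {n : ℕ} (σ : ℕ × ℕ × ℕ) (π : Equiv.Perm (Fin n))
    (g : (Fin n → Fin 3) → ℝ) : ∑ x ∈ cls n σ, g (x ∘ π) = ∑ x ∈ cls n σ, g x := by
  refine Finset.sum_bij' (fun x _ => x ∘ π) (fun x _ => x ∘ π.symm) ?_ ?_ ?_ ?_ ?_
  · intro x hx
    rw [mem_cls] at hx ⊢
    rw [cnt_comp_perm, hx]
  · intro x hx
    rw [mem_cls] at hx ⊢
    rw [cnt_comp_perm, hx]
  · intro x _; ext i; simp
  · intro x _; ext i; simp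
  · intro x _; rfl

/-- Configurations with the same color counts differ by a permutation of the vertices. -/
theorem exists_perm_of_cnt_eq {n : ℕ} {x y : Fin n → Fin 3} (h : cnt n x = cnt n y) :
    ∃ π : Equiv.Perm (Fin n), y = x ∘ π := by
  have hj : ∀ j, Fintype.card {i // y i = j} = Fintype.card {i // x i = j} := by
    intro j
    rw [Fintype.card_subtype, Fintype.card_subtype]
    have := tri_cnt n x j
    rw [h, tri_cnt] at this
    exact this
  have e : ∀ j, {i // y i = j} ≃ {i // x i = j} := fun j => Fintype.equivOfCardEq (hj j)
  refine ⟨(Equiv.sigmaFiberEquiv y).symm.trans ((Equiv.sigmaCongrRight e).trans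
    (Equiv.sigmaFiberEquiv x)), ?_⟩
  funext i
  exact (e (y i) ⟨i, rfl⟩).2.symm

/-- If every transposition moves `F` by at most `e` in square sum over a class, then a permutation
supported on at most `k` vertices moves it by at most `k² e`. -/
theorem perm_energy {n : ℕ} (σ : ℕ × ℕ × ℕ) (F : (Fin n → Fin 3) → ℝ) (e : ℝ)
    (he : 0 ≤ e) (hswap : ∀ i j : Fin n, ∑ x ∈ cls n σ, (F (x ∘ Equiv.swap i j) - F x) ^ 2 ≤ e) :
    ∀ (k : ℕ) (π : Equiv.Perm (Fin n)), π.support.card ≤ k →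
      ∑ x ∈ cls n σ, (F (x ∘ π) - F x) ^ 2 ≤ (k : ℝ) ^ 2 * e := by
  intro k
  induction k with
  | zero =>
    intro π h
    have : π = 1 := by
      rw [← Equiv.Perm.card_support_eq_zero]; omega
    subst this
    simp
  | succ k ih =>
    intro π h
    by_cases hπ : π = 1
    · subst hπ
      simp; positivity
    · obtain ⟨i, hi⟩ : ∃ i, π i ≠ i := by
        by_contra hcon
        push Not at hcon
        exact hπ (Equiv.ext hcon)
      have hlt := Equiv.Perm.card_support_swap_mul hi
      have h1 := ih (Equiv.swap i (π i) * π) (by omega)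
      set ρ := Equiv.swap i (π i) * π with hρ
      have hπρ : ∀ x : Fin n → Fin 3, x ∘ π = (x ∘ Equiv.swap i (π i)) ∘ ρ := by
        intro x; funext l
        simp [hρ]
      have h2 : ∑ x ∈ cls n σ, (F (x ∘ π) - F (x ∘ Equiv.swap i (π i))) ^ 2 ≤ (k : ℝ) ^ 2 * e := by
        simp only [hπρ]
        rw [sum_cls_comp_perm σ (Equiv.swap i (π i)) (fun y => (F (y ∘ ρ) - F y) ^ 2)]
        exact h1
      have h3 := hswap i (π i)
      rcases Nat.eq_zero_or_pos k with hk | hk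
      · subst hk
        have h4 : ρ.support.card = 0 := by omega
        rw [Equiv.Perm.card_support_eq_zero] at h4
        have : ∀ x : Fin n → Fin 3, x ∘ π = x ∘ Equiv.swap i (π i) := by
          intro x; rw [hπρ, h4]; rfl
        simpa [this] using h3
      · have hk' : (0 : ℝ) < k := by exact_mod_cast hk
        have hpt : ∀ p q r : ℝ, (p - r) ^ 2 ≤ (1 + 1 / k) * (p - q) ^ 2 + (1 + k) * (q - r) ^ 2 := by
          intro p q r
          have : (1 + 1 / k) * (p - q) ^ 2 + (1 + k) * (q - r) ^ 2 - (p - r) ^ 2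
              = ((p - q) - k * (q - r)) ^ 2 / k := by
            field_simp; ring
          have h0 : 0 ≤ ((p - q) - k * (q - r)) ^ 2 / (k : ℝ) := by positivity
          linarith
        calc ∑ x ∈ cls n σ, (F (x ∘ π) - F x) ^ 2
            ≤ (1 + 1 / k) * ∑ x ∈ cls n σ, (F (x ∘ π) - F (x ∘ Equiv.swap i (π i))) ^ 2
              + (1 + k) * ∑ x ∈ cls n σ, (F (x ∘ Equiv.swap i (π i)) - F x) ^ 2 := by
              simp only [Finset.mul_sum, ← Finset.sum_add_distrib]
              exact Finset.sum_le_sum fun x _ => hpt _ _ _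
          _ ≤ (1 + 1 / k) * ((k : ℝ) ^ 2 * e) + (1 + k) * e := by gcongr
          _ = _ := by push_cast; field_simp; ring

theorem comp_swap_eq {n : ℕ} (x : Fin n → Fin 3) {i j : Fin n} (hij : i ≠ j) :
    x ∘ Equiv.swap i j = Function.update (Function.update x i (x j)) j (x i) := by
  funext l
  by_cases hj : l = j
  · subst hj; simp
  by_cases hi : l = i
  · subst hi; simp [hij]
  · simp [hi, hj, Equiv.swap_apply_of_ne_of_ne hi hj]

/-- At an interior point `(t, k, k)` with `k + 3 ≤ t`, two differently colored vertices can be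
exchanged through one intermediate configuration that stays in `Ω_RGB`. -/
theorem exists_swap_midpoint {n t k : ℕ} (ht : k + 3 ≤ t) {x : Fin n → Fin 3}
    (hx : x ∈ cls n (t, k, k)) {i j : Fin n} (hij : x i ≠ x j) :
    Function.update x i (x j) ∈ RGBset n ∨ Function.update x j (x i) ∈ RGBset n := by
  have key : ∀ {i j : Fin n}, x i < x j →
      Function.update x i (x j) ∈ RGBset n ∨ Function.update x j (x i) ∈ RGBset n := by
    intro i j hlt
    have m1 := move_update n x i (x j) hlt.ne
    have m2 := move_update n x j (x i) hlt.ne'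
    have s0 := colorCount_sum n x
    rw [mem_cls] at hx
    rw [mem_RGBset_iff, mem_RGBset_iff, mem_KRGB, mem_KRGB]
    have s1 := colorCount_sum n (Function.update x i (x j))
    have s2 := colorCount_sum n (Function.update x j (x i))
    change (cnt n _).1 + (cnt n _).2.1 + (cnt n _).2.2 = n at s1
    change (cnt n _).1 + (cnt n _).2.1 + (cnt n _).2.2 = n at s2
    change (cnt n _).1 + (cnt n _).2.1 + (cnt n _).2.2 = n at s0
    rw [hx] at m1 m2 s0
    generalize cnt n (Function.update x i (x j)) = σ₁ at *
    generalize cnt n (Function.update x j (x i)) = σ₂ at *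
    generalize x i = p at *
    generalize x j = q at *
    obtain ⟨-, a1, a2, a3⟩ := m1
    obtain ⟨-, b1, b2, b3⟩ := m2
    have a30 := a3 0
    have a31 := a3 1
    have a32 := a3 2
    have b30 := b3 0
    have b31 := b3 1
    have b32 := b3 2
    clear a3 b3
    fin_cases p <;> fin_cases q <;> simp [tri] at * <;> omega
  rcases lt_or_gt_of_ne hij with h | h
  · exact key h
  · exact (key h).symm

/-- The mean square deviation over the class `(t, k, k)` is controlled by the Dirichlet form. -/
theorem msd_top {n : ℕ} {v : ℕ × ℕ × ℕ → ℝ} {Z : ℝ}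
    (hv : ∀ σ ∈ KRGB n, 0 < v σ) (hZ : 0 < Z) (F : (Fin n → Fin 3) → ℝ) {t k : ℕ}
    (hτ : (t, k, k) ∈ KRGB n) (ht : k + 3 ≤ t) {κ : ℝ} (hκ : 0 < κ) (hκ1 : κ ≤ 1)
    (hnb : ∀ a b σ', Move a b (t, k, k) σ' → σ' ∈ KRGB n → κ * v (t, k, k) ≤ v σ') :
    ∃ d, v (t, k, k) * msd n F d (t, k, k) ≤ 4 * (n : ℝ) ^ 3 / κ * (Z * dirForm n v Z F) := by
  set τ : ℕ × ℕ × ℕ := (t, k, k) with hτdef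
  have hN : (0 : ℝ) < (cls n τ).card := by exact_mod_cast card_cls_pos hτ
  have hvτ := hv τ hτ
  have hn1 : 1 ≤ n := by have := (mem_KRGB.1 hτ).1; simp only [hτdef] at this; omega
  have hn : (1 : ℝ) ≤ n := by exact_mod_cast hn1
  set G : (Fin n → Fin 3) → ℝ := fun x => ∑ i : Fin n, ∑ a : Fin 3,
    if Function.update x i a ∈ RGBset n then (F x - F (Function.update x i a)) ^ 2 else 0 with hG
  have hGterm : ∀ x i a, 0 ≤ if Function.update x i a ∈ RGBset n then
      (F x - F (Function.update x i a)) ^ 2 else 0 := by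
    intro x i a; split_ifs <;> positivity
  have hG0 : ∀ x, 0 ≤ G x := fun x => Finset.sum_nonneg fun i _ =>
    Finset.sum_nonneg fun a _ => hGterm x i a
  have hGle : ∀ x i a, Function.update x i a ∈ RGBset n →
      (F x - F (Function.update x i a)) ^ 2 ≤ G x := by
    intro x i a h
    have h1 := Finset.single_le_sum (fun a _ => hGterm x i a) (Finset.mem_univ a)
    have h2 := Finset.single_le_sum (f := fun i => ∑ a : Fin 3,
      if Function.update x i a ∈ RGBset n then (F x - F (Function.update x i a)) ^ 2 else 0)
      (fun i _ => Finset.sum_nonneg fun a _ => hGterm x i a) (Finset.mem_univ i)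
    rw [if_pos h] at h1
    exact h1.trans h2
  -- The edges at `τ` carry flow comparable with the mass of a configuration in `τ`.
  have hGD : v τ / (cls n τ).card * ∑ x ∈ cls n τ, G x ≤ n / κ * (Z * dirForm n v Z F) := by
    rw [Finset.mul_sum, ← mul_assoc]
    have hsub : ∑ x ∈ cls n τ, ∑ i : Fin n, ∑ a : Fin 3,
        (if Function.update x i a ∈ RGBset n then
        min (confPi n v Z x) (confPi n v Z (Function.update x i a)) *
        (F x - F (Function.update x i a)) ^ 2 else 0) ≤ dirForm n v Z F :=
      Finset.sum_le_sum_of_subset_of_nonneg (cls_subset hτ) fun x hx _ =>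
        Finset.sum_nonneg fun i _ => Finset.sum_nonneg fun a _ =>
          dirForm_term_nonneg hv hZ F hx i a
    refine le_trans ?_ (mul_le_mul_of_nonneg_left hsub (by positivity))
    rw [Finset.mul_sum]
    refine Finset.sum_le_sum fun x hx => ?_
    simp only [hG, Finset.mul_sum]
    refine Finset.sum_le_sum fun i _ => Finset.sum_le_sum fun a _ => ?_
    split_ifs with hy
    · by_cases hia : x i = a
      · subst hia; simp
      · rw [← mul_assoc]
        refine mul_le_mul_of_nonneg_right ?_ (sq_nonneg _)
        have hm := move_update n x i a hia
        rw [mem_RGBset_iff] at hy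
        rw [mem_cls.1 hx] at hm
        have hnb' := hnb _ _ _ hm hy
        have hcard := edge_card (n := n) hm
        unfold confPi
        rw [mem_cls.1 hx]
        generalize cnt n (Function.update x i a) = σ' at *
        have hN' : (0 : ℝ) < (cls n σ').card := by exact_mod_cast card_cls_pos hy
        have ha : (1 : ℝ) ≤ tri σ' a := by
          exact_mod_cast (by have := hm.2.2.1; omega : 1 ≤ tri σ' a)
        have hb : (tri τ (x i) : ℝ) ≤ n := by
          have h3 : tri τ (x i) ≤ n := by
            have := (mem_KRGB.1 hτ).1
            simp only [hτdef] at this ⊢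
            generalize x i = p
            fin_cases p <;> simp [tri] <;> omega
          exact_mod_cast h3
        have hNN : ((cls n σ').card : ℝ) ≤ n * (cls n τ).card := by
          calc ((cls n σ').card : ℝ) ≤ (cls n σ').card * tri σ' a :=
                le_mul_of_one_le_right hN'.le ha
            _ = (cls n τ).card * tri τ (x i) := hcard.symm
            _ ≤ (cls n τ).card * n := by gcongr
            _ = _ := mul_comm _ _
        rw [mul_min_of_nonneg _ _ (by positivity)]
        refine le_min ?_ ?_
        · have : (n : ℝ) / κ * Z * (v τ / ((cls n τ).card * Z))
            = n / κ * (v τ / (cls n τ).card) := by field_simp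
          rw [this]
          refine le_mul_of_one_le_left (by positivity) ?_
          rw [le_div_iff₀ hκ]; linarith
        · have : (n : ℝ) / κ * Z * (v σ' / ((cls n σ').card * Z))
            = n * v σ' / (κ * (cls n σ').card) := by field_simp
          rw [this, div_le_div_iff₀ hN (by positivity)]
          calc v τ * (κ * (cls n σ').card) = (κ * v τ) * (cls n σ').card := by ring
            _ ≤ v σ' * (n * (cls n τ).card) := by
                have := hv σ' hy
                gcongr
            _ = _ := by ring
    · simp
  have hswap : ∀ i j : Fin n, ∑ x ∈ cls n τ, (F (x ∘ Equiv.swap i j) - F x) ^ 2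
      ≤ 4 * ∑ x ∈ cls n τ, G x := by
    intro i j
    have hpt : ∀ x ∈ cls n τ, (F (x ∘ Equiv.swap i j) - F x) ^ 2
        ≤ 2 * G (x ∘ Equiv.swap i j) + 2 * G x := by
      intro x hx
      by_cases hxij : x i = x j
      · have : x ∘ Equiv.swap i j = x := by
          funext l
          by_cases hi : l = i
          · subst hi; simp [hxij]
          by_cases hj : l = j
          · subst hj; simp [hxij]
          · simp [Equiv.swap_apply_of_ne_of_ne hi hj]
        rw [this]
        have := hG0 x
        simp; linarith
      · have hij : i ≠ j := fun h => hxij (by rw [h])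
        have main : ∀ i j : Fin n, i ≠ j → Function.update x i (x j) ∈ RGBset n →
            (F (x ∘ Equiv.swap i j) - F x) ^ 2 ≤ 2 * G (x ∘ Equiv.swap i j) + 2 * G x := by
          intro i j hij hy
          have h1 := hGle x i (x j) hy
          have hback : Function.update (x ∘ Equiv.swap i j) j (x j)
              = Function.update x i (x j) := by
            rw [comp_swap_eq x hij]
            simp [hij.symm]
          have h2 := hGle (x ∘ Equiv.swap i j) j (x j) (by rw [hback]; exact hy)
          rw [hback] at h2
          set y := F (Function.update x i (x j))
          nlinarith [sq_nonneg ((F (x ∘ Equiv.swap i j) - y) + (F x - y))]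
        rcases exists_swap_midpoint ht hx hxij with h | h
        · exact main i j hij h
        · rw [Equiv.swap_comm]; exact main j i hij.symm h
    refine (Finset.sum_le_sum hpt).trans ?_
    rw [Finset.sum_add_distrib, ← Finset.mul_sum, ← Finset.mul_sum,
      sum_cls_comp_perm τ (Equiv.swap i j) G]
    linarith
  have hperm := perm_energy τ F _ (mul_nonneg (by norm_num)
    (Finset.sum_nonneg fun x _ => hG0 x)) hswap n
  -- The symmetrization of `F` over all vertex permutations is constant on the class.
  obtain ⟨x₀, hx₀⟩ := Finset.card_pos.1 (card_cls_pos hτ)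
  set d : ℝ := (∑ π : Equiv.Perm (Fin n), F (x₀ ∘ π)) / n.factorial with hd
  have hf : (0 : ℝ) < n.factorial := by exact_mod_cast Nat.factorial_pos n
  have hcard : ((Finset.univ : Finset (Equiv.Perm (Fin n))).card : ℝ) = n.factorial := by
    rw [Finset.card_univ, Fintype.card_perm, Fintype.card_fin]
  have hdx : ∀ x ∈ cls n τ, (F x - d) ^ 2
      ≤ (∑ π : Equiv.Perm (Fin n), (F (x ∘ π) - F x) ^ 2) / n.factorial := by
    intro x hx
    obtain ⟨ρ, hρ⟩ := exists_perm_of_cnt_eq ((mem_cls.1 hx₀).trans (mem_cls.1 hx).symm)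
    have hsum : ∑ π : Equiv.Perm (Fin n), F (x₀ ∘ π) = ∑ π : Equiv.Perm (Fin n), F (x ∘ π) := by
      rw [← Equiv.sum_comp (Equiv.mulLeft ρ) (fun π : Equiv.Perm (Fin n) => F (x₀ ∘ π)), hρ]
      rfl
    have h1 : F x - d = - ((∑ π : Equiv.Perm (Fin n), (F (x ∘ π) - F x)) / n.factorial) := by
      rw [Finset.sum_sub_distrib, Finset.sum_const, nsmul_eq_mul, hcard, hd, hsum]
      field_simp; ring
    have h2 := sq_sum_le_card_mul_sum_sq (s := (Finset.univ : Finset (Equiv.Perm (Fin n))))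
      (f := fun π => F (x ∘ π) - F x)
    rw [hcard] at h2
    rw [h1, neg_sq, div_pow, div_le_div_iff₀ (by positivity) hf]
    nlinarith
  refine ⟨d, ?_⟩
  have hmain : ∑ x ∈ cls n τ, (F x - d) ^ 2 ≤ (n : ℝ) ^ 2 * (4 * ∑ x ∈ cls n τ, G x) := by
    refine (Finset.sum_le_sum hdx).trans ?_
    rw [← Finset.sum_div, Finset.sum_comm, div_le_iff₀ hf]
    refine (Finset.sum_le_sum fun π _ => hperm π ?_).trans ?_
    · exact (Finset.card_le_univ _).trans (by simp)
    · rw [Finset.sum_const, nsmul_eq_mul, hcard, mul_comm]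
  calc v τ * msd n F d τ = v τ / (cls n τ).card * ∑ x ∈ cls n τ, (F x - d) ^ 2 := by
        rw [msd]; ring
    _ ≤ v τ / (cls n τ).card * ((n : ℝ) ^ 2 * (4 * ∑ x ∈ cls n τ, G x)) := by gcongr
    _ = 4 * (n : ℝ) ^ 2 * (v τ / (cls n τ).card * ∑ x ∈ cls n τ, G x) := by ring
    _ ≤ 4 * (n : ℝ) ^ 2 * (n / κ * (Z * dirForm n v Z F)) := by gcongr
    _ = _ := by ring

/-! ### The Poincaré inequality from climbing paths -/

theorem sum_confPi {n : ℕ} (v : ℕ × ℕ × ℕ → ℝ) (Z : ℝ) (g : (Fin n → Fin 3) → ℝ) :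
    ∑ x ∈ RGBset n, confPi n v Z x * g x =
      ∑ σ ∈ KRGB n, v σ * ((∑ x ∈ cls n σ, g x) / (cls n σ).card) / Z := by
  rw [← Finset.sum_fiberwise_of_maps_to (s := RGBset n) (t := KRGB n) (g := cnt n)
    (fun x hx => mem_RGBset_iff.1 hx)]
  refine Finset.sum_congr rfl fun σ hσ => ?_
  have hfil : (RGBset n).filter (fun x => cnt n x = σ) = cls n σ := by
    ext x
    rw [Finset.mem_filter, mem_cls, mem_RGBset_iff]
    constructor
    · exact fun h => h.2
    · rintro rfl; exact ⟨hσ, rfl⟩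
  rw [hfil, Finset.sum_congr rfl fun x hx => by rw [confPi, mem_cls.1 hx], ← Finset.mul_sum]
  rw [div_mul_eq_mul_div, mul_div_assoc', div_div]

/-- The Poincaré inequality on `Ω_RGB`: it suffices that every class reaches one interior class
`(t, k, k)` by a path along which the weight drops at most by a factor `κ`. -/
theorem poincare_of_climb {n : ℕ} {v : ℕ × ℕ × ℕ → ℝ} {Z : ℝ}
    (hv : ∀ σ ∈ KRGB n, 0 < v σ) (hZ : 0 < Z) (F : (Fin n → Fin 3) → ℝ) {t k : ℕ}
    (hτ : (t, k, k) ∈ KRGB n) (ht : k + 3 ≤ t) {κ₁ : ℝ} (hκ₁ : 0 < κ₁) (hκ1 : κ₁ ≤ 1)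
    (hnb : ∀ a b σ', Move a b (t, k, k) σ' → σ' ∈ KRGB n → κ₁ * v (t, k, k) ≤ v σ')
    {κ : ℝ} (hκ : 0 < κ) (m : ℕ)
    (hclimb : ∀ σ ∈ KRGB n, ∃ m' ≤ m, Climb n v (κ * v σ) m' σ (t, k, k)) :
    ∃ d, ∑ x ∈ RGBset n, confPi n v Z x * (F x - d) ^ 2 ≤
      ((n : ℝ) + 1) ^ 3 * ((m + 1) * (4 * (n : ℝ) ^ 3 / κ₁ / κ + m / κ)) * dirForm n v Z F := by
  obtain ⟨d, hd⟩ := msd_top hv hZ F hτ ht hκ₁ hκ1 hnb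
  refine ⟨d, ?_⟩
  set D := dirForm n v Z F with hD
  have hD0 : 0 ≤ D := dirForm_nonneg hv hZ F
  rw [sum_confPi]
  have hterm : ∀ σ ∈ KRGB n, v σ * ((∑ x ∈ cls n σ, (F x - d) ^ 2) / (cls n σ).card) / Z
      ≤ (m + 1) * (4 * (n : ℝ) ^ 3 / κ₁ / κ + m / κ) * D := by
    intro σ hσ
    obtain ⟨m', hm', hcl⟩ := hclimb σ hσ
    have hvσ := hv σ hσ
    have h1 := msd_climb hv hZ F (by positivity) d hcl
    have h2 := hcl.right_mem.2
    have hmm : (m' : ℝ) ≤ m := by exact_mod_cast hm'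
    have hmsd0 : 0 ≤ msd n F d (t, k, k) :=
      div_nonneg (Finset.sum_nonneg fun x _ => sq_nonneg _) (by positivity)
    rw [div_le_iff₀ hZ]
    change v σ * msd n F d σ ≤ _
    calc v σ * msd n F d σ
        ≤ v σ * ((m' + 1) * (msd n F d (t, k, k) + m' * (Z * D / (κ * v σ)))) := by gcongr
      _ ≤ v σ * ((m + 1) * (msd n F d (t, k, k) + m * (Z * D / (κ * v σ)))) := by gcongr
      _ = (m + 1) * ((κ * v σ) * msd n F d (t, k, k) / κ + m * (Z * D / κ)) := by
          field_simp
      _ ≤ (m + 1) * (v (t, k, k) * msd n F d (t, k, k) / κ + m * (Z * D / κ)) := by gcongr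
      _ ≤ (m + 1) * ((4 * (n : ℝ) ^ 3 / κ₁ * (Z * D)) / κ + m * (Z * D / κ)) := by gcongr
      _ = _ := by field_simp
  refine (Finset.sum_le_sum hterm).trans ?_
  rw [Finset.sum_const, nsmul_eq_mul, mul_assoc (((n : ℝ) + 1) ^ 3)]
  refine mul_le_mul_of_nonneg_right ?_ (by positivity)
  have hc : (KRGB n).card ≤ (n + 1) ^ 3 := by
    refine (Finset.card_filter_le _ _).trans ?_
    simp only [Finset.card_product, Finset.card_range]
    exact le_of_eq (by ring)
  exact_mod_cast hc

theorem flatPi_eq_confPi (n : ℕ) (β : ℝ) (tmin : ℕ) (x : ↥(RGBset n)) :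
    flatPi n β tmin x =
      confPi n (flatV n β tmin) (∑ σ ∈ KRGB n, flatV n β tmin σ) (x : Fin n → Fin 3) := by
  have h := card_cls n (cnt n x) (colorCount_sum n x)
  have hpos := card_cls_pos (mem_RGBset_iff.1 x.2)
  have hpos' : ((cls n (cnt n x)).card : ℝ) ≠ 0 := by exact_mod_cast hpos.ne'
  have hf : (n.factorial : ℝ) ≠ 0 := by exact_mod_cast n.factorial_ne_zero
  have h' : ((cls n (cnt n x)).card : ℝ) * (((cnt n x).1.factorial : ℝ) *
      ((cnt n x).2.1.factorial : ℝ) * ((cnt n x).2.2.factorial : ℝ)) = n.factorial := by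
    exact_mod_cast h
  unfold flatPi confPi
  change (((cnt n x).1.factorial : ℝ) * ((cnt n x).2.1.factorial : ℝ) *
      ((cnt n x).2.2.factorial : ℝ)) / n.factorial * flatV n β tmin (cnt n x) / _ = _
  rw [← div_div]
  congr 1
  rw [← h'] at hf ⊢
  have h2 := right_ne_zero_of_mul hf
  rw [div_mul_eq_mul_div, div_eq_div_iff hf hpos']
  ring

/-- The Dirichlet form of the Metropolis chain is `dirForm` up to the proposal normalization. -/
theorem dirForm_eq {n : ℕ} (hn : 0 < n) (v : ℕ × ℕ × ℕ → ℝ) (Z : ℝ) (π : ↥(RGBset n) → ℝ)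
    (P : Matrix ↥(RGBset n) ↥(RGBset n) ℝ) (hπ : ∀ x : ↥(RGBset n), π x = confPi n v Z x)
    (hP : ∀ x y, x ≠ y → π x * P x y = propRGB n x y * min (π x) (π y))
    (F : (Fin n → Fin 3) → ℝ) :
    dirForm n v Z F = 3 * n * ∑ x : ↥(RGBset n), ∑ y : ↥(RGBset n),
      π x * P x y * (F x - F y) ^ 2 := by
  have hn' : (0 : ℝ) < n := by exact_mod_cast hn
  unfold dirForm
  rw [← Finset.sum_coe_sort (RGBset n), Finset.mul_sum]
  refine Finset.sum_congr rfl fun x _ => ?_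
  set h : (Fin n → Fin 3) → ℝ := fun y =>
    min (confPi n v Z x) (confPi n v Z y) * (F x - F y) ^ 2 with hh
  have h1 : ∀ y : ↥(RGBset n), π x * P x y * (F x - F y) ^ 2 =
      pottsProp n x y * h y := by
    intro y
    by_cases hxy : x = y
    · subst hxy; simp [hh]
    · rw [hP x y hxy, hπ, hπ, propRGB, hh]; ring
  rw [Finset.sum_congr rfl fun y _ => h1 y, Finset.sum_coe_sort (RGBset n)
    (fun y => pottsProp n x y * h y)]
  have h2 : ∀ y, pottsProp n x y * h y = 1 / (3 * n) * ∑ p : Fin n × Fin 3,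
      if Function.update (x : Fin n → Fin 3) p.1 p.2 = y then h y else 0 := by
    intro y
    rw [← Finset.sum_filter, Finset.sum_const, nsmul_eq_mul, pottsProp]
    field_simp
  rw [Finset.sum_congr rfl fun y _ => h2 y, ← Finset.mul_sum, ← mul_assoc,
    mul_one_div_cancel (by positivity), one_mul]
  symm
  rw [Finset.sum_comm, Fintype.sum_prod_type]
  refine Finset.sum_congr rfl fun i _ => Finset.sum_congr rfl fun a _ => ?_
  rw [Finset.sum_ite_eq]

/-! ### The weight increment along the line of equal minority counts -/

/-- The reciprocal is convex on the positive reals. -/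
theorem inv_convex {u v a b : ℝ} (hu : 0 < u) (hv : 0 < v) (ha : 0 ≤ a) (hb : 0 ≤ b)
    (hab : a + b = 1) : 1 / (a * u + b * v) ≤ a * (1 / u) + b * (1 / v) := by
  have hpos : 0 < a * u + b * v := by
    rcases ha.eq_or_lt with rfl | ha'
    · have : b = 1 := by linarith
      subst this; simpa using hv
    · have := mul_pos ha' hu; have := mul_nonneg hb hv.le; linarith
  rw [div_le_iff₀ hpos]
  have hb' : b = 1 - a := by linarith
  have : (a * (1 / u) + b * (1 / v)) * (a * u + b * v) - 1 = a * b * (u - v) ^ 2 / (u * v) := by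
    subst hb'; field_simp; ring
  have h2 : 0 ≤ a * b * (u - v) ^ 2 / (u * v) := by positivity
  linarith

/-- The logarithmic weight increment `log (w (n-2k+2, k-1, k-1) / w (n-2k, k, k))` along the line
of equal minority counts, as a function of a real parameter. -/
noncomputable def incr (n β x : ℝ) : ℝ :=
  β * (2 * n - 6 * x + 3) + 2 * Real.log x - Real.log (n - 2 * x + 1) - Real.log (n - 2 * x + 2)

/-- The derivative of `incr`, a convex function. -/
noncomputable def incrDeriv (n β x : ℝ) : ℝ :=
  -6 * β + 2 * (1 / x) + 2 * (1 / (n - 2 * x + 1)) + 2 * (1 / (n - 2 * x + 2))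

theorem hasDerivAt_incr {n β x : ℝ} (hx : 0 < x) (hxn : 2 * x ≤ n) :
    HasDerivAt (incr n β) (incrDeriv n β x) x := by
  have h1 : HasDerivAt (fun y : ℝ => n - 2 * y + 1) (-2) x := by
    simpa using (((hasDerivAt_id x).const_mul 2).const_sub n).add_const 1
  have h2 : HasDerivAt (fun y : ℝ => n - 2 * y + 2) (-2) x := by
    simpa using (((hasDerivAt_id x).const_mul 2).const_sub n).add_const 2
  have h0 : HasDerivAt (fun y : ℝ => β * (2 * n - 6 * y + 3)) (β * (-6)) x := by
    simpa using ((((hasDerivAt_id x).const_mul 6).const_sub (2 * n)).add_const 3).const_mul β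
  have hl := ((Real.hasDerivAt_log hx.ne').const_mul 2)
  have := ((h0.add hl).sub (h1.log (by linarith))).sub (h2.log (by linarith))
  refine this.congr_deriv ?_
  have : n - 2 * x + 1 ≠ 0 := by linarith
  have : n - 2 * x + 2 ≠ 0 := by linarith
  unfold incrDeriv
  field_simp
  ring

theorem incr_mvt {n β x y : ℝ} (hx : 0 < x) (hxy : x < y) (hyn : 2 * y ≤ n) :
    ∃ z, x < z ∧ z < y ∧ incr n β y - incr n β x = incrDeriv n β z * (y - x) := by
  obtain ⟨z, hz, h⟩ := exists_hasDerivAt_eq_slope (incr n β) (incrDeriv n β) hxy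
    (fun z hz => (hasDerivAt_incr (by linarith [hz.1]) (by linarith [hz.2])).continuousAt.continuousWithinAt)
    (fun z hz => hasDerivAt_incr (by linarith [hz.1]) (by linarith [hz.2]))
  refine ⟨z, hz.1, hz.2, ?_⟩
  rw [h, div_mul_cancel₀]
  linarith

/-- A convex function that is negative and later positive stays positive. -/
theorem incrDeriv_pos {n β p q y : ℝ} (hp : 0 < p) (hpq : p < q) (hqy : q ≤ y) (hyn : 2 * y ≤ n)
    (h1 : incrDeriv n β p < 0) (h2 : 0 < incrDeriv n β q) : 0 < incrDeriv n β y := by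
  have hpy : 0 < y - p := by linarith
  set a := (y - q) / (y - p) with ha
  set b := (q - p) / (y - p) with hb
  have ha0 : 0 ≤ a := div_nonneg (by linarith) hpy.le
  have hb0 : 0 < b := div_pos (by linarith) hpy
  have hab : a + b = 1 := by rw [ha, hb]; field_simp; ring
  have hq : q = a * p + b * y := by rw [ha, hb]; field_simp; ring
  have e1 := inv_convex hp (by linarith : 0 < y) ha0 hb0.le hab
  have e2 := inv_convex (u := n - 2 * p + 1) (v := n - 2 * y + 1) (by linarith) (by linarith)
    ha0 hb0.le hab
  have e3 := inv_convex (u := n - 2 * p + 2) (v := n - 2 * y + 2) (by linarith) (by linarith)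
    ha0 hb0.le hab
  have ha' : a = 1 - b := by linarith
  have f2 : a * (n - 2 * p + 1) + b * (n - 2 * y + 1) = n - 2 * q + 1 := by
    rw [hq, ha']; ring
  have f3 : a * (n - 2 * p + 2) + b * (n - 2 * y + 2) = n - 2 * q + 2 := by
    rw [hq, ha']; ring
  rw [← hq] at e1
  rw [f2] at e2
  rw [f3] at e3
  have key : incrDeriv n β q ≤ a * incrDeriv n β p + b * incrDeriv n β y := by
    unfold incrDeriv
    have : -6 * β = a * (-6 * β) + b * (-6 * β) := by rw [← add_mul, hab, one_mul]
    linarith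
  have h3 : a * incrDeriv n β p ≤ 0 := mul_nonpos_of_nonneg_of_nonpos ha0 h1.le
  have : 0 < b * incrDeriv n β y := by linarith
  exact pos_of_mul_pos_right this hb0.le

/-- At the balanced point `x = n/3` a nonnegative increment excludes a positive derivative. -/
theorem incr_balanced {K β : ℝ} (hK : 10 ≤ K) (h1 : 0 ≤ incr (3 * K) β K)
    (h2 : 0 < incrDeriv (3 * K) β K) : False := by
  unfold incr at h1
  unfold incrDeriv at h2
  have hK0 : 0 < K := by linarith
  have e1 : 3 * K - 2 * K + 1 = K * (1 + 1 / K) := by field_simp; ring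
  have e2 : 3 * K - 2 * K + 2 = K * (1 + 2 / K) := by field_simp; ring
  rw [e1, e2, Real.log_mul hK0.ne' (by positivity), Real.log_mul hK0.ne' (by positivity)] at h1
  have l1 := Real.le_log_one_add_of_nonneg (x := 1 / K) (by positivity)
  have l2 := Real.le_log_one_add_of_nonneg (x := 2 / K) (by positivity)
  have m1 : 2 * (1 / K) / (1 / K + 2) = 2 / (2 * K + 1) := by field_simp; ring
  have m2 : 2 * (2 / K) / (2 / K + 2) = 2 / (K + 1) := by field_simp; ring
  rw [m1] at l1
  rw [m2] at l2
  have e3 : 1 / (3 * K - 2 * K + 1) = 1 / (K + 1) := by congr 1; ring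
  have e4 : 1 / (3 * K - 2 * K + 2) = 1 / (K + 2) := by congr 1; ring
  rw [e3, e4] at h2
  have h3 : 1 / K + 1 / (K + 1) + 1 / (K + 2) ≤ 2 / (2 * K + 1) + 2 / (K + 1) := by
    rw [div_add_div _ _ (by positivity) (by positivity), div_add_div _ _ (by positivity)
      (by positivity), div_add_div _ _ (by positivity) (by positivity),
      div_le_div_iff₀ (by positivity) (by positivity)]
    obtain ⟨t, ht, rfl⟩ : ∃ t : ℝ, 0 ≤ t ∧ K = 10 + t := ⟨K - 10, by linarith, by ring⟩
    have : 0 ≤ t ^ 2 := by positivity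
    have : 0 ≤ t ^ 3 := by positivity
    have : 0 ≤ t ^ 4 := by positivity
    have : 0 ≤ t ^ 5 := by positivity
    ring_nf
    linarith
  have : β * (2 * (3 * K) - 6 * K + 3) = 3 * β := by ring
  linarith

/-- Up to the minimizer `k0` of the weight along the line, an increment that is once nonnegative
stays nonnegative: a sign change back would force, by convexity of the derivative, a positive
derivative from there on, contradicting minimality or `incr_balanced`. -/
theorem incr_single_crossing {K : ℕ} {β : ℝ} (hK : 10 ≤ K) {k0 : ℕ} (hk0 : k0 ≤ K)
    (h1 : 1 ≤ k0 → 0 ≤ incr (3 * K) β k0)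
    (h2 : k0 < K → incr (3 * K) β (k0 + 1) ≤ 0) {i k : ℕ} (hi : 1 ≤ i) (hik : i < k)
    (hk : k ≤ k0) (hDi : 0 ≤ incr (3 * K) β i) : 0 ≤ incr (3 * K) β k := by
  by_contra hneg
  push Not at hneg
  have hKr : (10 : ℝ) ≤ K := by exact_mod_cast hK
  have hkk : k < k0 := by
    rcases hk.eq_or_lt with rfl | h
    · exact absurd (h1 (by omega)) (not_le.2 hneg)
    · exact h
  have hir : (1 : ℝ) ≤ i := by exact_mod_cast hi
  have hikr : (i : ℝ) < k := by exact_mod_cast hik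
  have hkkr : (k : ℝ) < k0 := by exact_mod_cast hkk
  have hk0r : (k0 : ℝ) ≤ K := by exact_mod_cast hk0
  have hDk0 := h1 (by omega)
  obtain ⟨p, hp1, hp2, hp⟩ := incr_mvt (n := 3 * K) (β := β) (by linarith) hikr (by linarith)
  obtain ⟨q, hq1, hq2, hq⟩ := incr_mvt (n := 3 * K) (β := β) (by linarith) hkkr (by linarith)
  have hpneg : incrDeriv (3 * K) β p < 0 := by
    by_contra h
    have := mul_nonneg (not_lt.1 h) (sub_nonneg.2 hikr.le)
    linarith
  have hqpos : 0 < incrDeriv (3 * K) β q := by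
    by_contra h
    have := mul_nonneg_of_nonpos_of_nonpos (not_lt.1 h) (sub_nonpos.2 hkkr.le)
    nlinarith
  rcases hk0.eq_or_lt with rfl | hlt
  · exact incr_balanced hKr hDk0
      (incrDeriv_pos (by linarith) (by linarith) hq2.le (by linarith) hpneg hqpos)
  · have hltr : (k0 : ℝ) + 1 ≤ K := by exact_mod_cast hlt
    obtain ⟨z, hz1, hz2, hz⟩ := incr_mvt (n := 3 * K) (β := β) (x := k0) (y := k0 + 1)
      (by linarith) (by linarith) (by linarith)
    have hzp := incrDeriv_pos (y := z) (by linarith) (by linarith) (by linarith) (by linarith)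
      hpneg hqpos
    have := h2 hlt
    have : 0 < incrDeriv (3 * K) β z * (k0 + 1 - k0) := by
      apply mul_pos hzp; linarith
    linarith

/-! ### Weight ratios and the climb to the line -/

theorem pottsWeight_pos (n : ℕ) (β : ℝ) (σ : ℕ × ℕ × ℕ) : 0 < pottsWeight n β σ := by
  unfold pottsWeight
  have := Nat.factorial_pos
  have h : ∀ m : ℕ, (0 : ℝ) < m.factorial := fun m => by exact_mod_cast this m
  have := h n; have := h σ.1; have := h σ.2.1; have := h σ.2.2
  positivity

/-- The weight ratio of a single recoloring, with `p` the old count of the new color and `q` the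
new count of the old color. -/
theorem pottsWeight_move {n : ℕ} {β : ℝ} {a b : Fin 3} {σ σ' : ℕ × ℕ × ℕ} (h : Move a b σ σ') :
    pottsWeight n β σ' * ((tri σ a : ℝ) + 1) = pottsWeight n β σ *
      (((tri σ' b : ℝ) + 1) * Real.exp (β * ((tri σ a : ℝ) - tri σ' b))) := by
  obtain ⟨s0, s1, s2⟩ := σ
  obtain ⟨r0, r1, r2⟩ := σ'
  obtain ⟨hab, hb, ha, hj⟩ := h
  have h0 := hj 0
  have h1 := hj 1
  have h2 := hj 2
  have hf : ∀ m : ℕ, (m.factorial : ℝ) ≠ 0 := fun m => by exact_mod_cast m.factorial_ne_zero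
  fin_cases a <;> fin_cases b <;> simp [tri] at hab ha hb h0 h1 h2 ⊢ <;> subst_vars <;>
  · simp only [pottsWeight, Nat.factorial_succ]
    push_cast
    have e : ∀ A B p q x y z : ℝ, x = y + z → A * p = B * q →
        A * Real.exp x * p = B * Real.exp y * (q * Real.exp z) := by
      rintro A B p q x y z rfl h
      rw [Real.exp_add]
      linear_combination (Real.exp y * Real.exp z) * h
    refine e _ _ _ _ _ _ _ (by ring) ?_
    field_simp

theorem pottsWeight_move_mono {n : ℕ} {β : ℝ} {a b : Fin 3} {σ σ' : ℕ × ℕ × ℕ}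
    (h : Move a b σ σ')
    (hs : 0 ≤ ((tri σ a : ℝ) - tri σ' b) * (β * ((tri σ' b : ℝ) + 1) - 1)) :
    pottsWeight n β σ ≤ pottsWeight n β σ' := by
  have e := pottsWeight_move (n := n) (β := β) h
  have hw := pottsWeight_pos n β σ
  set p : ℝ := (tri σ a : ℝ)
  set q : ℝ := (tri σ' b : ℝ)
  have hp : 0 ≤ p := Nat.cast_nonneg _
  have hq : 0 ≤ q := Nat.cast_nonneg _
  have h1 : p + 1 ≤ (q + 1) * Real.exp (β * (p - q)) := by
    have := mul_le_mul_of_nonneg_left (Real.add_one_le_exp (β * (p - q))) (by linarith : 0 ≤ q + 1)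
    nlinarith
  have h2 := mul_le_mul_of_nonneg_left h1 hw.le
  rw [← e] at h2
  exact le_of_mul_le_mul_right h2 (by linarith)

theorem tri_sum {n : ℕ} {σ : ℕ × ℕ × ℕ} (hσ : σ ∈ KRGB n) (a b : Fin 3) (hab : a ≠ b) :
    tri σ a + tri σ b ≤ n := by
  have := (mem_KRGB.1 hσ).1
  fin_cases a <;> fin_cases b <;> simp [tri] at hab ⊢ <;> omega

/-- A recoloring changes the weight by at most a polynomial factor. -/
theorem pottsWeight_move_lower {n : ℕ} {μ : ℝ} (hμ : 0 ≤ μ) (hn : Real.exp μ ≤ n) {a b : Fin 3}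
    {σ σ' : ℕ × ℕ × ℕ} (hσ : σ ∈ KRGB n) (h : Move a b σ σ') :
    1 / (n : ℝ) ^ 2 * pottsWeight n (μ / n) σ ≤ pottsWeight n (μ / n) σ' := by
  have e := pottsWeight_move (n := n) (β := μ / n) h
  have hw := pottsWeight_pos n (μ / n) σ
  have hw' := pottsWeight_pos n (μ / n) σ'
  have hn0 : (0 : ℝ) < n := (Real.exp_pos μ).trans_le hn
  have hs := tri_sum hσ a b h.1
  have hb := h.2.1
  have hpn : (tri σ a : ℝ) + 1 ≤ n := by exact_mod_cast (by omega : tri σ a + 1 ≤ n)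
  have hqn : (tri σ' b : ℝ) ≤ n := by exact_mod_cast (by omega : tri σ' b ≤ n)
  set p : ℝ := (tri σ a : ℝ)
  set q : ℝ := (tri σ' b : ℝ)
  have hp : 0 ≤ p := Nat.cast_nonneg _
  have hq : 0 ≤ q := Nat.cast_nonneg _
  have hexp : 1 / (n : ℝ) ≤ Real.exp (μ / n * (p - q)) := by
    calc 1 / (n : ℝ) ≤ 1 / Real.exp μ := one_div_le_one_div_of_le (Real.exp_pos _) hn
      _ = Real.exp (-μ) := by rw [Real.exp_neg, one_div]
      _ ≤ _ := by
        apply Real.exp_le_exp.2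
        have h1 : μ / n * (-n) = -μ := by field_simp
        rw [← h1]
        exact mul_le_mul_of_nonneg_left (by linarith) (by positivity)
  have h2 : 1 / (n : ℝ) ≤ (q + 1) * Real.exp (μ / n * (p - q)) := by
    have := Real.exp_pos (μ / n * (p - q))
    nlinarith
  have h3 : pottsWeight n (μ / n) σ * (1 / n) ≤ pottsWeight n (μ / n) σ' * n := by
    calc _ ≤ pottsWeight n (μ / n) σ * ((q + 1) * Real.exp (μ / n * (p - q))) := by gcongr
      _ = _ := e.symm
      _ ≤ _ := by gcongr
  rw [one_div_mul_eq_div, div_le_iff₀ (by positivity)]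
  rw [mul_one_div, div_le_iff₀ hn0] at h3
  linarith

/-- The flattened weight truncates `w` at the level of `σ_min` left of `t_min`. -/
theorem flatV_eq (n : ℕ) (β : ℝ) (t : ℕ) (σ : ℕ × ℕ × ℕ) :
    flatV n β t σ = if σ.1 < t then
      min (pottsWeight n β σ) (pottsWeight n β (t, (n - t) / 2, (n - t) / 2))
      else pottsWeight n β σ := by
  unfold flatV
  by_cases h : σ.1 < t
  · by_cases h' : pottsWeight n β (t, (n - t) / 2, (n - t) / 2) ≤ pottsWeight n β σ
    · simp [h, h']
    · simp [h, h', (not_le.1 h').le]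
  · simp [h]

theorem flatV_pos (n : ℕ) (β : ℝ) (t : ℕ) (σ : ℕ × ℕ × ℕ) : 0 < flatV n β t σ := by
  rw [flatV_eq]
  split_ifs
  · exact lt_min (pottsWeight_pos _ _ _) (pottsWeight_pos _ _ _)
  · exact pottsWeight_pos _ _ _

theorem flatV_le (n : ℕ) (β : ℝ) (t : ℕ) (σ : ℕ × ℕ × ℕ) :
    flatV n β t σ ≤ pottsWeight n β σ := by
  rw [flatV_eq]
  split_ifs
  · exact min_le_left _ _
  · exact le_rfl

/-- Weight comparisons pass to the flattened weight when the majority count does not decrease. -/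
theorem flatV_transfer {n : ℕ} {β : ℝ} {t : ℕ} {σ σ' : ℕ × ℕ × ℕ} {κ : ℝ} (hκ : 0 ≤ κ)
    (hκ1 : κ ≤ 1) (h1 : σ.1 ≤ σ'.1) (h : κ * pottsWeight n β σ ≤ pottsWeight n β σ') :
    κ * flatV n β t σ ≤ flatV n β t σ' := by
  rw [flatV_eq n β t σ']
  have h2 := mul_le_mul_of_nonneg_left (flatV_le n β t σ) hκ
  split_ifs with ht
  · refine le_min (h2.trans h) ?_
    have h3 : flatV n β t σ ≤ pottsWeight n β (t, (n - t) / 2, (n - t) / 2) := by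
      rw [flatV_eq, if_pos (by omega)]
      exact min_le_right _ _
    calc κ * flatV n β t σ ≤ 1 * flatV n β t σ := by
          gcongr; exact (flatV_pos _ _ _ _).le
      _ ≤ _ := by rw [one_mul]; exact h3
  · exact h2.trans h

theorem Climb.mono {n : ℕ} {v : ℕ × ℕ × ℕ → ℝ} {c c' : ℝ} {m : ℕ} {σ τ : ℕ × ℕ × ℕ}
    (h : Climb n v c m σ τ) (hc : c' ≤ c) : Climb n v c' m σ τ := by
  induction h with
  | refl σ h1 h2 => exact Climb.refl σ h1 (hc.trans h2)
  | step a b σ σ' τ m h1 h2 h3 h4 ih => exact Climb.step a b _ _ _ _ h1 (hc.trans h2) h3 ih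

theorem move_zero_one (p q r : ℕ) : Move 0 1 (p, q + 1, r) (p + 1, q, r) := by
  refine ⟨by decide, rfl, rfl, fun j h1 h2 => ?_⟩
  fin_cases j <;> simp_all [tri]

theorem move_zero_two (p q r : ℕ) : Move 0 2 (p, q, r + 1) (p + 1, q, r) := by
  refine ⟨by decide, rfl, rfl, fun j h1 h2 => ?_⟩
  fin_cases j <;> simp_all [tri]

theorem move_two_one (p q r : ℕ) : Move 2 1 (p, q + 1, r) (p, q, r + 1) := by
  refine ⟨by decide, rfl, rfl, fun j h1 h2 => ?_⟩
  fin_cases j <;> simp_all [tri]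

/-- Every class climbs, losing at most one polynomial factor, to the line of equal minority
counts: while the two minority counts are far apart, one of the recolorings blue to red and blue to
green does not decrease the weight, according to the side of `1/β` on which the blue count lies. -/
theorem climb_to_line {n : ℕ} {μ : ℝ} (hμ : 0 < μ) (hn : Real.exp μ ≤ n) (t d : ℕ) :
    ∀ σ ∈ KRGB n, σ.2.1 ≤ σ.2.2 + d → ∀ c, c ≤ 1 / (n : ℝ) ^ 2 * flatV n (μ / n) t σ →
      ∃ k, 3 * k ≤ n ∧ ∃ m ≤ d, Climb n (flatV n (μ / n) t) c m σ (n - 2 * k, k, k) := by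
  have hn1 : (1 : ℝ) ≤ n := (Real.one_le_exp hμ.le).trans hn
  have hκ0 : (0 : ℝ) ≤ 1 / (n : ℝ) ^ 2 := by positivity
  have hκ1 : 1 / (n : ℝ) ^ 2 ≤ 1 := by
    rw [div_le_one (by positivity)]
    exact one_le_pow₀ hn1
  have hle : ∀ σ, 1 / (n : ℝ) ^ 2 * flatV n (μ / n) t σ ≤ flatV n (μ / n) t σ := fun σ =>
    mul_le_of_le_one_left (flatV_pos _ _ _ _).le hκ1
  induction d using Nat.strong_induction_on with
  | _ d ih =>
    rintro ⟨s0, s1, s2⟩ hσ hd c hc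
    have hmem := mem_KRGB.1 hσ
    simp only at hmem hd
    have hcσ := hc.trans (hle _)
    rcases Nat.lt_or_ge s1 (s2 + 1) with hlt | hge
    · obtain rfl : s1 = s2 := by omega
      refine ⟨s1, by omega, 0, by omega, ?_⟩
      have : n - 2 * s1 = s0 := by omega
      rw [this]
      exact Climb.refl _ hσ hcσ
    obtain ⟨q, rfl⟩ : ∃ q, s1 = q + 1 := ⟨s1 - 1, by omega⟩
    have hup : (s0 + 1, q, s2) ∈ KRGB n := mem_KRGB.2 ⟨by simp only; omega, by simp only; omega, by simp only; omega⟩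
    rcases Nat.lt_or_ge q (s2 + 1) with hlt | hge2
    · obtain rfl : q = s2 := by omega
      refine ⟨q, by omega, 1, by omega, ?_⟩
      have : n - 2 * q = s0 + 1 := by omega
      rw [this]
      refine Climb.step 0 1 _ _ _ 0 hσ hcσ (move_zero_one s0 q q) (Climb.refl _ hup (hc.trans ?_))
      exact flatV_transfer hκ0 hκ1 (by simp) (pottsWeight_move_lower hμ.le hn hσ (move_zero_one _ _ _))
    rcases le_total 1 (μ / n * ((q : ℝ) + 1)) with hq | hq
    · have hmv := move_zero_one s0 q s2
      have hw : pottsWeight n (μ / n) (s0, q + 1, s2) ≤ pottsWeight n (μ / n) (s0 + 1, q, s2) := by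
        refine pottsWeight_move_mono hmv ?_
        have : (q : ℝ) ≤ s0 := by exact_mod_cast (by omega : q ≤ s0)
        exact mul_nonneg (by simpa [tri] using this) (by simpa [tri] using hq)
      have hv := flatV_transfer (t := t) (κ := 1) zero_le_one le_rfl (Nat.le_succ s0)
        ((one_mul _).le.trans hw)
      rw [one_mul] at hv
      obtain ⟨k, hk, m, hm, hcl⟩ := ih (d - 1) (by omega) _ hup (show q ≤ s2 + (d - 1) by omega) c
        (hc.trans (mul_le_mul_of_nonneg_left hv hκ0))
      exact ⟨k, hk, m + 1, by omega, Climb.step _ _ _ _ _ _ hσ hcσ hmv hcl⟩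
    · have hmv := move_two_one s0 q s2
      have hin : (s0, q, s2 + 1) ∈ KRGB n := mem_KRGB.2 ⟨by simp only; omega, by simp only; omega, by simp only; omega⟩
      have hw : pottsWeight n (μ / n) (s0, q + 1, s2) ≤ pottsWeight n (μ / n) (s0, q, s2 + 1) := by
        refine pottsWeight_move_mono hmv ?_
        have : (s2 : ℝ) ≤ q := by exact_mod_cast (by omega : s2 ≤ q)
        exact mul_nonneg_of_nonpos_of_nonpos (by simpa [tri] using this) (by simpa [tri] using hq)
      have hv := flatV_transfer (t := t) (κ := 1) zero_le_one le_rfl (le_refl s0)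
        ((one_mul _).le.trans hw)
      rw [one_mul] at hv
      obtain ⟨k, hk, m, hm, hcl⟩ := ih (d - 1) (by omega) _ hin (show q ≤ s2 + 1 + (d - 1) by omega) c
        (hc.trans (mul_le_mul_of_nonneg_left hv hκ0))
      exact ⟨k, hk, m + 1, by omega, Climb.step _ _ _ _ _ _ hσ hcσ hmv hcl⟩

/-! ### The flattened landscape -/

theorem pottsWeight_line {n j : ℕ} {β : ℝ} (h : 2 * (j + 1) ≤ n) :
    pottsWeight n β (n - 2 * j, j, j) =
      pottsWeight n β (n - 2 * (j + 1), j + 1, j + 1) * Real.exp (incr n β ((j : ℝ) + 1)) := by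
  obtain ⟨p, rfl⟩ : ∃ p, n = p + 2 * (j + 1) := ⟨n - 2 * (j + 1), by omega⟩
  have e1 : p + 2 * (j + 1) - 2 * j = p + 1 + 1 := by omega
  have e2 : p + 2 * (j + 1) - 2 * (j + 1) = p := by omega
  rw [e1, e2]
  have h1 := pottsWeight_move (n := p + 2 * (j + 1)) (β := β) (move_zero_two p (j + 1) j)
  have h2 := pottsWeight_move (n := p + 2 * (j + 1)) (β := β) (move_zero_one (p + 1) j j)
  simp only [tri, Matrix.cons_val_zero, Matrix.cons_val_one, Matrix.cons_val] at h1 h2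
  have hp1 : (0 : ℝ) < (p : ℝ) + 1 := by positivity
  have hp2 : (0 : ℝ) < (p : ℝ) + 2 := by positivity
  have hj : (0 : ℝ) < (j : ℝ) + 1 := by positivity
  have hi : Real.exp (incr ((p + 2 * (j + 1) : ℕ) : ℝ) β ((j : ℝ) + 1)) =
      Real.exp (β * ((p : ℝ) - j)) * Real.exp (β * ((p : ℝ) + 1 - j)) * ((j : ℝ) + 1) ^ 2 /
        ((p : ℝ) + 1) / ((p : ℝ) + 2) := by
    have : incr ((p + 2 * (j + 1) : ℕ) : ℝ) β ((j : ℝ) + 1) =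
        β * ((p : ℝ) - j) + β * ((p : ℝ) + 1 - j) + (Real.log ((j : ℝ) + 1) +
          Real.log ((j : ℝ) + 1)) - Real.log ((p : ℝ) + 1) - Real.log ((p : ℝ) + 2) := by
      unfold incr
      push_cast
      have a1 : (p : ℝ) + 2 * ((j : ℝ) + 1) - 2 * ((j : ℝ) + 1) + 1 = p + 1 := by ring
      have a2 : (p : ℝ) + 2 * ((j : ℝ) + 1) - 2 * ((j : ℝ) + 1) + 2 = p + 2 := by ring
      rw [a1, a2]
      ring
    rw [this, Real.exp_sub, Real.exp_sub, Real.exp_add, Real.exp_add, Real.exp_add,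
      Real.exp_log hj, Real.exp_log hp1, Real.exp_log hp2]
    ring
  rw [hi]
  push_cast at h2
  rw [mul_div_assoc', mul_div_assoc', eq_div_iff hp2.ne', eq_div_iff hp1.ne']
  have h2' : pottsWeight (p + 2 * (j + 1)) β (p + 1 + 1, j, j) * ((p : ℝ) + 2) =
      pottsWeight (p + 2 * (j + 1)) β (p + 1, j + 1, j) *
        (((j : ℝ) + 1) * Real.exp (β * ((p : ℝ) + 1 - j))) := by
    rw [← h2]; ring
  rw [h2']
  linear_combination (((j : ℝ) + 1) * Real.exp (β * ((p : ℝ) + 1 - j))) * h1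

/-- The flattened landscape has one peak class `(t, k, k)`, interior to the ordering constraints,
which every class reaches along a path of linear length losing only polynomial factors. -/
theorem landscape {n : ℕ} {μ : ℝ} (hμ : 0 < μ) (hn : Real.exp μ ≤ n) (hn30 : 30 ≤ n)
    (h6 : 6 ∣ n) {tmin : ℕ} (ht : tmin ∈ tCandidates n)
    (hmin : ∀ t ∈ tCandidates n,
      pottsWeight n (μ / n) (tmin, (n - tmin) / 2, (n - tmin) / 2) ≤
        pottsWeight n (μ / n) (t, (n - t) / 2, (n - t) / 2)) :
    ∃ t k, (t, k, k) ∈ KRGB n ∧ k + 3 ≤ t ∧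
      (∀ a b σ', Move a b (t, k, k) σ' → σ' ∈ KRGB n →
        1 / (n : ℝ) ^ 2 * flatV n (μ / n) tmin (t, k, k) ≤ flatV n (μ / n) tmin σ') ∧
      ∀ σ ∈ KRGB n, ∃ m ≤ 3 * n, Climb n (flatV n (μ / n) tmin)
        (1 / (n : ℝ) ^ 4 * flatV n (μ / n) tmin σ) m σ (t, k, k) := by
  obtain ⟨K, rfl⟩ : ∃ K, n = 3 * K := ⟨n / 3, by omega⟩
  set n := 3 * K with hnK
  have hnr : ((n : ℕ) : ℝ) = 3 * (K : ℝ) := by rw [hnK]; push_cast; ring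
  set β := μ / n with hβ
  set v := flatV n β tmin with hv
  set w := pottsWeight n β with hw
  have hwpos : ∀ σ, 0 < w σ := pottsWeight_pos n β
  have hvpos : ∀ σ, 0 < v σ := flatV_pos n β tmin
  have hn1 : (1 : ℝ) ≤ n := (Real.one_le_exp hμ.le).trans hn
  set κ := 1 / (n : ℝ) ^ 2 with hκ
  have hκ0 : 0 ≤ κ := by positivity
  have hκ1 : κ ≤ 1 := by
    rw [hκ, div_le_one (by positivity)]
    exact one_le_pow₀ hn1
  have hle : ∀ σ, κ * v σ ≤ v σ := fun σ => mul_le_of_le_one_left (hvpos _).le hκ1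
  -- the minimizer is the point `k = k0` of the line `k ↦ (n - 2k, k, k)`
  have ht' := ht
  simp only [tCandidates, Finset.mem_filter, Finset.mem_Icc] at ht'
  obtain ⟨k0, hk0⟩ : ∃ k0, n - tmin = 2 * k0 := ht'.2
  have htk : tmin = n - 2 * k0 := by omega
  have hk0K : k0 ≤ K := by omega
  have hdiv : (n - tmin) / 2 = k0 := by omega
  have hminK : ∀ k ≤ K, w (n - 2 * k0, k0, k0) ≤ w (n - 2 * k, k, k) := by
    intro k hk
    have := hmin (n - 2 * k) (by
      simp only [tCandidates, Finset.mem_filter, Finset.mem_Icc]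
      exact ⟨by omega, ⟨k, by omega⟩⟩)
    rw [hdiv, show (n - (n - 2 * k)) / 2 = k by omega, htk] at this
    exact this
  have hveq : ∀ σ, v σ = if σ.1 < n - 2 * k0 then min (w σ) (w (n - 2 * k0, k0, k0)) else w σ := by
    intro σ
    rw [hv, flatV_eq, hdiv, htk]
  have hline : ∀ j, 3 * (j + 1) ≤ n → w (n - 2 * j, j, j) =
      w (n - 2 * (j + 1), j + 1, j + 1) * Real.exp (incr (3 * (K : ℝ)) β ((j : ℝ) + 1)) := by
    intro j hj
    rw [← hnr]
    exact pottsWeight_line (by omega)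
  have hinc_le : ∀ j, 3 * (j + 1) ≤ n → incr (3 * (K : ℝ)) β ((j : ℝ) + 1) ≤ 0 →
      w (n - 2 * j, j, j) ≤ w (n - 2 * (j + 1), j + 1, j + 1) := by
    intro j hj h
    rw [hline j hj]
    exact mul_le_of_le_one_right (hwpos _).le (Real.exp_le_one_iff.2 h)
  have hle_inc : ∀ j, 3 * (j + 1) ≤ n → 0 ≤ incr (3 * (K : ℝ)) β ((j : ℝ) + 1) →
      w (n - 2 * (j + 1), j + 1, j + 1) ≤ w (n - 2 * j, j, j) := by
    intro j hj h
    rw [hline j hj]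
    exact le_mul_of_one_le_right (hwpos _).le (Real.one_le_exp h)
  have hD0 : 1 ≤ k0 → 0 ≤ incr (3 * (K : ℝ)) β k0 := by
    intro h
    obtain ⟨j, rfl⟩ : ∃ j, k0 = j + 1 := ⟨k0 - 1, by omega⟩
    have h1 := hminK j (by omega)
    rw [hline j (by omega)] at h1
    have h2 := (le_mul_iff_one_le_right (hwpos _)).1 h1
    push_cast
    exact Real.one_le_exp_iff.1 h2
  have hD1 : k0 < K → incr (3 * (K : ℝ)) β ((k0 : ℝ) + 1) ≤ 0 := by
    intro h
    have h1 := hminK (k0 + 1) (by omega)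
    rw [hline k0 (by omega)] at h1
    have h2 := (mul_le_iff_le_one_right (hwpos _)).1 h1
    exact Real.exp_le_one_iff.1 h2
  -- the peak is the last point before the first nonnegative increment
  obtain ⟨ks, hks0, hksn, hksu, hksd, hks1⟩ : ∃ ks, ks ≤ k0 ∧ 3 * ks + 3 ≤ n ∧
      (∀ j, ks ≤ j → j < k0 → 0 ≤ incr (3 * (K : ℝ)) β ((j : ℝ) + 1)) ∧
      (∀ j, j < ks → incr (3 * (K : ℝ)) β ((j : ℝ) + 1) ≤ 0) ∧ (1 ≤ k0 → ks < k0) := by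
    rcases Nat.eq_zero_or_pos k0 with h0 | h0
    · exact ⟨0, by omega, by omega, fun j _ h => by omega, fun j h => by omega, by omega⟩
    · have hex : ∃ j : ℕ, 0 ≤ incr (3 * (K : ℝ)) β ((j : ℝ) + 1) := by
        refine ⟨k0 - 1, ?_⟩
        have := hD0 h0
        rwa [show (k0 : ℝ) = ((k0 - 1 : ℕ) : ℝ) + 1 by
          rw [Nat.cast_sub h0]; push_cast; ring] at this
      classical
      have hfk : Nat.find hex ≤ k0 - 1 := by
        refine Nat.find_min' hex ?_
        have := hD0 h0
        rwa [show (k0 : ℝ) = ((k0 - 1 : ℕ) : ℝ) + 1 by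
          rw [Nat.cast_sub h0]; push_cast; ring] at this
      refine ⟨Nat.find hex, by omega, by omega, ?_, ?_, by omega⟩
      · intro j hj hjk
        have hspec := Nat.find_spec hex
        rcases hj.eq_or_lt with h | h
        · rwa [← h]
        · have := incr_single_crossing (β := β) (by omega : 10 ≤ K) hk0K hD0 hD1
            (i := Nat.find hex + 1) (k := j + 1) (by omega) (by omega) (by omega)
            (by push_cast; exact hspec)
          push_cast at this
          exact this
      · intro j hj
        exact (not_le.1 (Nat.find_min hex hj)).le
  have hE : ∀ k, k ≤ K → (n - 2 * k, k, k) ∈ KRGB n := fun k hk =>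
    mem_KRGB.2 ⟨show n - 2 * k + k + k = n by omega, show k ≤ n - 2 * k by omega, le_rfl⟩
  -- for `k > ks` two recolorings to red decrease `k` by one and do not decrease `v`
  have hup : ∀ j c, ks + j ≤ K → c ≤ κ * v (n - 2 * (ks + j), ks + j, ks + j) →
      Climb n v c (2 * j) (n - 2 * (ks + j), ks + j, ks + j) (n - 2 * ks, ks, ks) := by
    intro j
    induction j with
    | zero => exact fun c h hc => Climb.refl _ (hE _ h) (hc.trans (hle _))
    | succ j ih =>
      intro c h hc
      set i := ks + j with hi
      have hi1 : ks + (j + 1) = i + 1 := by omega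
      rw [hi1] at h hc ⊢
      have hp : n - 2 * i = n - 2 * (i + 1) + 1 + 1 := by omega
      have hmono : v (n - 2 * (i + 1), i + 1, i + 1) ≤ v (n - 2 * i, i, i) := by
        rcases Nat.lt_or_ge i k0 with hlt | hge
        · have := flatV_transfer (t := tmin) (κ := 1) zero_le_one le_rfl
            (show n - 2 * (i + 1) ≤ n - 2 * i by omega)
            ((one_mul _).le.trans (hle_inc i (by omega) (hksu i (by omega) hlt)))
          rwa [one_mul] at this
        · refine le_trans (b := w (n - 2 * k0, k0, k0)) ?_ ?_
          · rw [hveq, if_pos (show n - 2 * (i + 1) < n - 2 * k0 by omega)]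
            exact min_le_right _ _
          · rw [hveq]
            split_ifs
            · exact le_min (hminK i (by omega)) le_rfl
            · exact hminK i (by omega)
      have hmv := move_zero_two (n - 2 * (i + 1)) (i + 1) i
      have hmid : (n - 2 * (i + 1) + 1, i + 1, i) ∈ KRGB n :=
        mem_KRGB.2 ⟨show n - 2 * (i + 1) + 1 + (i + 1) + i = n by omega,
          show i + 1 ≤ n - 2 * (i + 1) + 1 by omega, Nat.le_succ i⟩
      have hvmid : κ * v (n - 2 * (i + 1), i + 1, i + 1) ≤ v (n - 2 * (i + 1) + 1, i + 1, i) :=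
        flatV_transfer hκ0 hκ1 (Nat.le_succ _) (pottsWeight_move_lower hμ.le hn (hE _ h) hmv)
      refine Climb.step 0 2 _ _ _ (2 * j + 1) (hE _ h) (hc.trans (hle _)) hmv ?_
      refine Climb.step 0 1 _ _ _ (2 * j) hmid (hc.trans hvmid) (move_zero_one _ _ _) ?_
      rw [← hp]
      exact ih c (by omega) (hc.trans (mul_le_mul_of_nonneg_left hmono hκ0))
  -- for `k < ks ≤ k0` nothing is flattened, and increasing `k` by one does not decrease `w`
  have hdown : ∀ j c, j ≤ ks → c ≤ κ * v (n - 2 * (ks - j), ks - j, ks - j) →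
      Climb n v c (2 * j) (n - 2 * (ks - j), ks - j, ks - j) (n - 2 * ks, ks, ks) := by
    intro j
    induction j with
    | zero => exact fun c h hc => Climb.refl _ (hE _ (by omega)) (hc.trans (hle _))
    | succ j ih =>
      intro c h hc
      set i := ks - (j + 1) with hi
      have hi1 : ks - j = i + 1 := by omega
      rw [hi1] at ih
      have hvw : ∀ σ : ℕ × ℕ × ℕ, n - 2 * k0 ≤ σ.1 → v σ = w σ := fun σ hσ => by
        rw [hveq, if_neg (by omega)]
      obtain ⟨p, hp⟩ : ∃ p, n - 2 * i = p + 1 + 1 := ⟨n - 2 * i - 2, by omega⟩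
      have hp2 : n - 2 * (i + 1) = p := by omega
      have hwi := hinc_le i (by omega) (hksd i (by omega))
      have hEi := hE i (by omega)
      rw [hp] at hc hwi hEi ⊢
      rw [hp2] at ih hwi
      have hmono : v (p + 1 + 1, i, i) ≤ v (p, i + 1, i + 1) := by
        rw [hvw _ (show n - 2 * k0 ≤ p + 1 + 1 by omega), hvw _ (show n - 2 * k0 ≤ p by omega)]
        exact hwi
      have hmv := (move_zero_one (p + 1) i i).symm
      have hmid : (p + 1, i + 1, i) ∈ KRGB n :=
        mem_KRGB.2 ⟨show p + 1 + (i + 1) + i = n by omega, show i + 1 ≤ p + 1 by omega,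
          Nat.le_succ i⟩
      have hvmid : κ * v (p + 1 + 1, i, i) ≤ v (p + 1, i + 1, i) := by
        rw [hvw _ (show n - 2 * k0 ≤ p + 1 + 1 by omega),
          hvw _ (show n - 2 * k0 ≤ p + 1 by omega)]
        exact pottsWeight_move_lower hμ.le hn hEi hmv
      refine Climb.step 1 0 _ _ _ (2 * j + 1) hEi (hc.trans (hle _)) hmv ?_
      refine Climb.step 2 0 _ _ _ (2 * j) hmid (hc.trans hvmid) (move_zero_two _ _ _).symm ?_
      exact ih c (by omega) (hc.trans (mul_le_mul_of_nonneg_left hmono hκ0))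
  refine ⟨n - 2 * ks, ks, hE ks (by omega), by omega, ?_, ?_⟩
  · intro a b σ' hm hσ'
    have hlow := pottsWeight_move_lower hμ.le hn (hE ks (by omega)) hm
    have h1 : κ * v (n - 2 * ks, ks, ks) ≤ w σ' :=
      (mul_le_mul_of_nonneg_left (flatV_le _ _ _ _) hκ0).trans hlow
    have hfirst : n - 2 * ks ≤ σ'.1 + 1 := by
      obtain ⟨hab, hb, ha, hj⟩ := hm
      change tri (n - 2 * ks, ks, ks) 0 ≤ tri σ' 0 + 1
      by_cases h0 : (0 : Fin 3) = a
      · subst h0; omega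
      by_cases h0' : (0 : Fin 3) = b
      · subst h0'; omega
      rw [hj 0 h0 h0']
      omega
    rw [hveq σ']
    split_ifs with hlt
    · refine le_min h1 ?_
      have hk00 : k0 = 0 := by
        by_contra h
        have := hks1 (by omega)
        omega
      have hks00 : ks = 0 := by omega
      rw [hk00, hks00]
      exact (hle _).trans (flatV_le _ _ _ _)
    · exact h1
  · intro σ hσ
    have hmem := mem_KRGB.1 hσ
    obtain ⟨k, hk, m, hm, hcl⟩ := climb_to_line hμ hn tmin n σ hσ (by omega) _ le_rfl
    have hend := hcl.right_mem.2
    have hκκ : 1 / (n : ℝ) ^ 4 = κ * κ := by rw [hκ]; field_simp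
    have hlev : 1 / (n : ℝ) ^ 4 * v σ ≤ κ * v (n - 2 * k, k, k) := by
      rw [hκκ, mul_assoc]
      exact mul_le_mul_of_nonneg_left hend hκ0
    have hlev2 : 1 / (n : ℝ) ^ 4 * v σ ≤ κ * v σ := by
      rw [hκκ, mul_assoc]
      exact mul_le_mul_of_nonneg_left (hle _) hκ0
    rcases le_total ks k with h | h
    · obtain ⟨j, rfl⟩ := Nat.exists_eq_add_of_le h
      exact ⟨m + 2 * j, by omega, (hcl.mono hlev2).trans (hup j _ (by omega) hlev)⟩
    · have hkj : ks - (ks - k) = k := by omega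
      have := hdown (ks - k) (1 / (n : ℝ) ^ 4 * v σ) (by omega) (by rw [hkj]; exact hlev)
      rw [hkj] at this
      exact ⟨m + 2 * (ks - k), by omega, (hcl.mono hlev2).trans this⟩

/-! ### Mixing time -/

theorem pottsWeight_eq_card {n : ℕ} {σ : ℕ × ℕ × ℕ} (hσ : σ ∈ KRGB n) (β : ℝ) :
    pottsWeight n β σ = (cls n σ).card *
      Real.exp ((β / 2) * ((σ.1 : ℝ) ^ 2 + (σ.2.1 : ℝ) ^ 2 + (σ.2.2 : ℝ) ^ 2)) := by
  have h : ((cls n σ).card : ℝ) * ((σ.1.factorial : ℝ) * (σ.2.1.factorial : ℝ) *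
      (σ.2.2.factorial : ℝ)) = n.factorial := by
    exact_mod_cast card_cls n σ (mem_KRGB.1 hσ).1
  have hf : ∀ m : ℕ, (m.factorial : ℝ) ≠ 0 := fun m => by exact_mod_cast m.factorial_ne_zero
  unfold pottsWeight
  rw [← h, mul_div_assoc, div_self (mul_ne_zero (mul_ne_zero (hf _) (hf _)) (hf _)), mul_one]

theorem card_cls_le (n : ℕ) (σ : ℕ × ℕ × ℕ) : ((cls n σ).card : ℝ) ≤ Real.exp (2 * n) := by
  have h1 : (cls n σ).card ≤ 3 ^ n := by
    refine (Finset.card_le_univ _).trans ?_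
    simp
  have h3 : (3 : ℝ) ≤ Real.exp 2 := by
    have := Real.add_one_le_exp (2 : ℝ)
    linarith
  calc ((cls n σ).card : ℝ) ≤ 3 ^ n := by exact_mod_cast h1
    _ ≤ Real.exp 2 ^ n := by gcongr
    _ = Real.exp (2 * n) := by rw [← Real.exp_nat_mul]; congr 1; ring

theorem one_le_pottsWeight {n : ℕ} {σ : ℕ × ℕ × ℕ} (hσ : σ ∈ KRGB n) {β : ℝ} (hβ : 0 ≤ β) :
    1 ≤ pottsWeight n β σ := by
  rw [pottsWeight_eq_card hσ]
  have h1 : (1 : ℝ) ≤ (cls n σ).card := by exact_mod_cast card_cls_pos hσ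
  exact one_le_mul_of_one_le_of_one_le h1 (Real.one_le_exp (by positivity))

theorem pottsWeight_le {n : ℕ} {σ : ℕ × ℕ × ℕ} (hσ : σ ∈ KRGB n) {μ : ℝ} (hμ : 0 ≤ μ)
    (hn : 0 < n) : pottsWeight n (μ / n) σ ≤ Real.exp (2 * n + μ * n / 2) := by
  rw [pottsWeight_eq_card hσ, Real.exp_add]
  have hn' : (0 : ℝ) < n := by exact_mod_cast hn
  refine mul_le_mul (card_cls_le n σ) (Real.exp_le_exp.2 ?_) (Real.exp_pos _).le (Real.exp_pos _).le
  have hs : (σ.1 : ℝ) + σ.2.1 + σ.2.2 = n := by exact_mod_cast (mem_KRGB.1 hσ).1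
  have h2 : (σ.1 : ℝ) ^ 2 + (σ.2.1 : ℝ) ^ 2 + (σ.2.2 : ℝ) ^ 2 ≤ (n : ℝ) ^ 2 := by
    rw [← hs]
    have a : (0 : ℝ) ≤ σ.1 := Nat.cast_nonneg _
    have b : (0 : ℝ) ≤ σ.2.1 := Nat.cast_nonneg _
    have c : (0 : ℝ) ≤ σ.2.2 := Nat.cast_nonneg _
    nlinarith [mul_nonneg a b, mul_nonneg a c, mul_nonneg b c]
  calc μ / n / 2 * _ ≤ μ / n / 2 * (n : ℝ) ^ 2 := by gcongr
    _ = μ * n / 2 := by field_simp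

/-- The flattened distribution is bounded below by an inverse exponential of a polynomial. -/
theorem inv_flatPi_le {n : ℕ} {μ : ℝ} (hμ : 0 < μ) (hn : Real.exp μ ≤ n) (hn30 : 30 ≤ n)
    {tmin : ℕ} (hT : (tmin, (n - tmin) / 2, (n - tmin) / 2) ∈ KRGB n) (x : ↥(RGBset n)) :
    1 / flatPi n (μ / n) tmin x ≤ Real.exp ((n : ℝ) ^ 2) := by
  have hn0 : (0 : ℝ) < n := by exact_mod_cast (by omega : 0 < n)
  have hβ : 0 ≤ μ / n := by positivity
  have hσ := mem_RGBset_iff.1 x.2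
  set Z := ∑ σ ∈ KRGB n, flatV n (μ / n) tmin σ with hZ
  have hZ0 : 0 ≤ Z := Finset.sum_nonneg fun σ _ => (flatV_pos _ _ _ _).le
  have hv1 : 1 ≤ flatV n (μ / n) tmin (cnt n x) := by
    rw [flatV_eq]
    split_ifs
    · exact le_min (one_le_pottsWeight hσ hβ) (one_le_pottsWeight hT hβ)
    · exact one_le_pottsWeight hσ hβ
  have hcard : ((KRGB n).card : ℝ) ≤ ((n : ℝ) + 1) ^ 3 := by
    have hc : (KRGB n).card ≤ (n + 1) ^ 3 := by
      refine (Finset.card_filter_le _ _).trans ?_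
      simp only [Finset.card_product, Finset.card_range]
      exact le_of_eq (by ring)
    exact_mod_cast hc
  have hZle : Z ≤ Real.exp (3 * n) * Real.exp (2 * n + μ * n / 2) := by
    calc Z ≤ ∑ σ ∈ KRGB n, Real.exp (2 * n + μ * n / 2) :=
          Finset.sum_le_sum fun σ hσ => (flatV_le _ _ _ _).trans
            (pottsWeight_le hσ hμ.le (by omega))
      _ = (KRGB n).card * Real.exp (2 * n + μ * n / 2) := by rw [Finset.sum_const, nsmul_eq_mul]
      _ ≤ ((n : ℝ) + 1) ^ 3 * Real.exp (2 * n + μ * n / 2) := by gcongr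
      _ ≤ Real.exp n ^ 3 * Real.exp (2 * n + μ * n / 2) := by
          gcongr; exact Real.add_one_le_exp _
      _ = _ := by rw [← Real.exp_nat_mul]; norm_num
  rw [flatPi_eq_confPi, confPi, one_div_div]
  have hμn : μ + 1 ≤ n := (Real.add_one_le_exp μ).trans hn
  have hnr : (30 : ℝ) ≤ n := by exact_mod_cast hn30
  calc ((cls n (cnt n x)).card : ℝ) * Z / flatV n (μ / n) tmin (cnt n x)
      ≤ (cls n (cnt n x)).card * Z := div_le_self (by positivity) hv1
    _ ≤ Real.exp (2 * n) * (Real.exp (3 * n) * Real.exp (2 * n + μ * n / 2)) := by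
        gcongr; exact card_cls_le _ _
    _ = Real.exp (7 * n + μ * n / 2) := by
        rw [← Real.exp_add, ← Real.exp_add]; congr 1; ring
    _ ≤ _ := Real.exp_le_exp.2 (by nlinarith)

/-- The Poincaré inequality for the flattened Metropolis chain. -/
theorem flat_poincare {n : ℕ} {μ : ℝ} (hμ : 0 < μ) (hn : Real.exp μ ≤ n) (hn30 : 30 ≤ n)
    (h6 : 6 ∣ n) {tmin : ℕ} (ht : tmin ∈ tCandidates n)
    (hmin : ∀ t ∈ tCandidates n,
      pottsWeight n (μ / n) (tmin, (n - tmin) / 2, (n - tmin) / 2) ≤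
        pottsWeight n (μ / n) (t, (n - t) / 2, (n - t) / 2))
    (P : Matrix ↥(RGBset n) ↥(RGBset n) ℝ)
    (hP : ∀ x y, x ≠ y → flatPi n (μ / n) tmin x * P x y =
      propRGB n x y * min (flatPi n (μ / n) tmin x) (flatPi n (μ / n) tmin y))
    (hZ : 0 < ∑ σ ∈ KRGB n, flatV n (μ / n) tmin σ) (f : ↥(RGBset n) → ℝ) :
    ∃ c, ∑ x, flatPi n (μ / n) tmin x * (f x - c) ^ 2 ≤
      (n : ℝ) ^ 16 * ∑ x, ∑ y, flatPi n (μ / n) tmin x * P x y * (f x - f y) ^ 2 := by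
  have hnr : (30 : ℝ) ≤ n := by exact_mod_cast hn30
  have hn0 : (0 : ℝ) < n := by linarith
  obtain ⟨t, k, hτ, htk, hnb, hcl⟩ := landscape hμ hn hn30 h6 ht hmin
  set v := flatV n (μ / n) tmin with hv
  set Z := ∑ σ ∈ KRGB n, v σ with hZdef
  set F : (Fin n → Fin 3) → ℝ := fun x => if h : x ∈ RGBset n then f ⟨x, h⟩ else 0 with hF
  have hFf : ∀ x : ↥(RGBset n), F x = f x := fun x => by simp [hF]
  have hvpos : ∀ σ ∈ KRGB n, 0 < v σ := fun σ _ => flatV_pos _ _ _ _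
  have hκ1 : 1 / (n : ℝ) ^ 2 ≤ 1 := by
    rw [div_le_one (by positivity)]
    exact one_le_pow₀ (by linarith)
  obtain ⟨d, hd⟩ := poincare_of_climb hvpos hZ F hτ htk (by positivity) hκ1 hnb
    (by positivity) (3 * n) hcl
  refine ⟨d, ?_⟩
  have hπ : ∀ x, flatPi n (μ / n) tmin x = confPi n v Z x := flatPi_eq_confPi n (μ / n) tmin
  have hdir := dirForm_eq (by omega) v Z (flatPi n (μ / n) tmin) P hπ hP F
  have hD0 := dirForm_nonneg hvpos hZ F
  simp only [hFf] at hdir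
  set E := ∑ x, ∑ y, flatPi n (μ / n) tmin x * P x y * (f x - f y) ^ 2 with hE
  have hE0 : 0 ≤ E := by
    rw [hdir] at hD0
    exact nonneg_of_mul_nonneg_right hD0 (by positivity)
  rw [← Finset.sum_coe_sort (RGBset n), hdir] at hd
  simp only [hFf, ← hπ] at hd
  refine hd.trans ?_
  rw [← mul_assoc]
  refine mul_le_mul_of_nonneg_right ?_ hE0
  push_cast
  have e1 : 4 * (n : ℝ) ^ 3 / (1 / (n : ℝ) ^ 2) / (1 / (n : ℝ) ^ 4) + 3 * n / (1 / (n : ℝ) ^ 4) =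
      4 * (n : ℝ) ^ 9 + 3 * (n : ℝ) ^ 5 := by field_simp
  rw [e1]
  have e2 : (n : ℝ) ^ 5 ≤ (n : ℝ) ^ 9 := pow_le_pow_right₀ (by linarith) (by norm_num)
  calc ((n : ℝ) + 1) ^ 3 * ((3 * n + 1) * (4 * (n : ℝ) ^ 9 + 3 * (n : ℝ) ^ 5)) * (3 * n)
      ≤ (2 * (n : ℝ)) ^ 3 * ((4 * n) * (4 * (n : ℝ) ^ 9 + 3 * (n : ℝ) ^ 9)) * (3 * n) := by
        gcongr <;> linarith
    _ = 672 * (n : ℝ) ^ 14 := by ring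
    _ ≤ (n : ℝ) ^ 2 * (n : ℝ) ^ 14 := by gcongr; nlinarith
    _ = (n : ℝ) ^ 16 := by ring

/-- for every `μ > 4·ln 2` there are `c > 0` and `N` such that for all
`n ≥ N` divisible by 6, with `β* = μ/n`, the Metropolis chain on `Ω_RGB` with the
flattened stationary distribution `π̃` mixes in polynomial time:
`τ(ε) ≤ n^c·(1 + ln(1/ε))` for every `ε ∈ (0,1)`. -/
theorem flattened_metropolis_RGB_polynomial_mixing :
    ∀ μ : ℝ, 4 * Real.log 2 < μ → ∃ c : ℝ, 0 < c ∧ ∃ N : ℕ,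
      ∀ n : ℕ, N ≤ n → 6 ∣ n → ∀ tmin : ℕ, tmin ∈ tCandidates n →
        (∀ t ∈ tCandidates n,
          pottsWeight n (μ / n) (tmin, (n - tmin) / 2, (n - tmin) / 2) ≤
            pottsWeight n (μ / n) (t, (n - t) / 2, (n - t) / 2)) →
        ∀ ε : ℝ, 0 < ε → ε < 1 →
          (mixingTime (metropolis (propRGB n) (flatPi n (μ / n) tmin))
              (flatPi n (μ / n) tmin) ε : ℝ) ≤
            (n : ℝ) ^ c * (1 + Real.log (1 / ε)) := by
  intro μ hμ4
  have hμ : 0 < μ := by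
    have := Real.log_pos (by norm_num : (1 : ℝ) < 2)
    linarith
  refine ⟨19, by norm_num, max 30 ⌈Real.exp μ⌉₊, fun n hN h6 tmin ht hmin ε hε hε1 => ?_⟩
  have hn30 : 30 ≤ n := (le_max_left _ _).trans hN
  have hn : Real.exp μ ≤ n :=
    (Nat.le_ceil _).trans (by exact_mod_cast (le_max_right _ _).trans hN)
  have hnr : (30 : ℝ) ≤ n := by exact_mod_cast hn30
  have hn0 : (0 : ℝ) < n := by linarith
  have hT : (tmin, (n - tmin) / 2, (n - tmin) / 2) ∈ KRGB n := by
    simp only [tCandidates, Finset.mem_filter, Finset.mem_Icc] at ht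
    refine mem_KRGB.2 ⟨?_, ?_, le_rfl⟩ <;> dsimp only <;> omega
  set v := flatV n (μ / n) tmin with hv
  set Z := ∑ σ ∈ KRGB n, v σ with hZdef
  have hvpos : ∀ σ ∈ KRGB n, 0 < v σ := fun σ _ => flatV_pos _ _ _ _
  have hZ : 0 < Z := Finset.sum_pos hvpos ⟨_, hT⟩
  set π := flatPi n (μ / n) tmin with hπdef
  have hπ : ∀ x, π x = confPi n v Z x := flatPi_eq_confPi n (μ / n) tmin
  have hπpos : ∀ x, 0 < π x := fun x => by rw [hπ]; exact confPi_pos hvpos hZ x.2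
  have hsum : ∑ x, π x = 1 := by
    have h := sum_confPi (n := n) v Z (fun _ => 1)
    rw [← Finset.sum_coe_sort (RGBset n)] at h
    simp only [mul_one, ← hπ] at h
    have hone : ∑ σ ∈ KRGB n, v σ / Z = 1 := by
      rw [← Finset.sum_div, ← hZdef, div_self hZ.ne']
    rw [h]
    refine Eq.trans (Finset.sum_congr rfl fun σ hσ => ?_) hone
    have : ((cls n σ).card : ℝ) ≠ 0 := by exact_mod_cast (card_cls_pos hσ).ne'
    rw [Finset.sum_const, nsmul_eq_mul, mul_one, div_self this, mul_one]
  obtain ⟨hP0, hrow, hrev, hold, hoff⟩ := metropolis_props (propRGB n) π hπpos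
    (fun x y => pottsProp_nonneg _ _ _) (fun x y => pottsProp_symm _ _ _)
    (propRGB_move_le n (by omega))
  set P := metropolis (propRGB n) π with hPdef
  set L := Real.log (1 / ε) with hL
  have hL0 : 0 ≤ L := Real.log_nonneg (by rw [le_div_iff₀ hε]; linarith)
  -- `exp (n² - t/(3n¹⁶)) ≤ ε²` as soon as `t ≥ A`
  set A : ℝ := 3 * (n : ℝ) ^ 16 * ((n : ℝ) ^ 2 + 2 * L) with hA
  have hA0 : 0 ≤ A := by positivity
  have hmix : mixingTime P π ε ≤ ⌈A⌉₊ := by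
    refine Nat.sInf_le ?_
    intro t htA x
    have hdec := tv_decay P π hπpos hsum hP0 hrow hrev hold ((n : ℝ) ^ 16) (by positivity)
      (flat_poincare hμ hn hn30 h6 ht hmin P hoff hZ) t x
    have htr : A ≤ t := (Nat.le_ceil A).trans (by exact_mod_cast htA)
    have hexp : (n : ℝ) ^ 2 + 2 * L ≤ t / (3 * (n : ℝ) ^ 16) := by
      rw [le_div_iff₀ (by positivity)]
      linarith
    have hεL : Real.exp (-(2 * L)) = ε ^ 2 := by
      rw [hL, one_div, Real.log_inv, mul_neg, neg_neg, two_mul, Real.exp_add, Real.exp_log hε,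
        sq]
    have hsq : (∑ y, |(P ^ t) x y - π y|) ^ 2 ≤ ε ^ 2 := by
      refine hdec.trans ?_
      calc 1 / π x * Real.exp (-(t / (3 * (n : ℝ) ^ 16)))
          ≤ Real.exp ((n : ℝ) ^ 2) * Real.exp (-((n : ℝ) ^ 2 + 2 * L)) := by
            gcongr
            exact inv_flatPi_le hμ hn hn30 hT x
        _ = ε ^ 2 := by rw [← Real.exp_add, ← hεL]; congr 1; ring
    have := abs_le_of_sq_le_sq' hsq hε.le
    linarith [this.2]
  have hpow : (n : ℝ) ^ (19 : ℝ) = (n : ℝ) ^ 19 := by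
    rw [← Real.rpow_natCast]; norm_num
  rw [hpow]
  calc (mixingTime P π ε : ℝ) ≤ (⌈A⌉₊ : ℝ) := by exact_mod_cast hmix
    _ ≤ A + 1 := (Nat.ceil_lt_add_one hA0).le
    _ ≤ _ := by
      have h1 : (1 : ℝ) ≤ (n : ℝ) ^ 18 := one_le_pow₀ (by linarith)
      have h2 : (n : ℝ) ^ 16 ≤ (n : ℝ) ^ 18 := pow_le_pow_right₀ (by linarith) (by norm_num)
      have h3 : 30 * (n : ℝ) ^ 18 ≤ (n : ℝ) ^ 19 := by
        rw [pow_succ _ 18, mul_comm]; gcongr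
      have h4 := mul_le_mul_of_nonneg_right h2 hL0
      have h5 := mul_le_mul_of_nonneg_right h3 hL0
      have h6' : 0 ≤ (n : ℝ) ^ 18 * L := by positivity
      have hAeq : A = 3 * (n : ℝ) ^ 18 + 6 * ((n : ℝ) ^ 16 * L) := by rw [hA]; ring
      rw [hAeq]
      linarith
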